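/- Let B₊ = {(x',x'') ∈ ℝ^{n−1}×ℝ : |x'|² + |x''|² < 1, x'' > 0} be the open upper half of the unit ball in ℝⁿ and Γ = {(x',x'') ∈ B̄₊ : x'' = 0} its flat face. There exist γ = γ(n) ∈ (0,1) and C = C(n) > 0 such that: if h is harmonic in B₊, h ∈ C¹(B̄₊), |h| ≤ 1 and |∇h| ≤ 1 in B₊, and |h| ≤ ε and |∂h/∂x''| ≤ ε on Γ for some ε > 0, then |h(x)| ≤ C ε^γ for every x in the half-ball (1/3)B₊ = {(x',x'') : |x'|² + |x''|² < 1/9, x'' > 0}. -/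

import Mathlib

noncomputable section

open MeasureTheory Metric Set Filter Asymptotics
open scoped Topology NNReal ENNReal RealInnerProductSpace

namespace NodalNeumann

/-- Euclidean space `ℝⁿ`. -/
abbrev Euc (n : ℕ) : Type := EuclideanSpace ℝ (Fin n)

/-- The first `n` coordinates `y'` of a point `y = (y', y'') ∈ ℝ^{n+1}`. -/
def front {n : ℕ} (y : Euc (n + 1)) : Euc n :=
  (EuclideanSpace.equiv (Fin n) ℝ).symm fun i => y i.castSucc

/-- The last coordinate `y''` of a point `y = (y', y'') ∈ ℝ^{n+1}`. -/
def lastc {n : ℕ} (y : Euc (n + 1)) : ℝ := y (Fin.last n)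

/-- `(v, a) ∈ ℝ^{n+1}` built from `v ∈ ℝⁿ` and `a ∈ ℝ`. -/
def snocVec {n : ℕ} (v : Euc n) (a : ℝ) : Euc (n + 1) :=
  (EuclideanSpace.equiv (Fin (n + 1)) ℝ).symm
    fun i => if h : i = Fin.last n then a else v (i.castPred h)

/-- The Laplacian of `u : ℝⁿ → ℝ`. -/
def laplacian {n : ℕ} (u : Euc n → ℝ) (x : Euc n) : ℝ :=
  ∑ i : Fin n, fderiv ℝ (fun y => fderiv ℝ u y (EuclideanSpace.single i 1)) x
    (EuclideanSpace.single i 1)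

/-- `u` is harmonic on `s`. -/
def HarmonicOn {n : ℕ} (u : Euc n → ℝ) (s : Set (Euc n)) : Prop :=
  ContDiffOn ℝ 2 u s ∧ ∀ x ∈ s, laplacian u x = 0

/-- `ν` is the outward unit normal vector of `Ω` at the boundary point `x`:
it is a unit vector, points out of `Ω`, `-ν` points into `Ω`, and it is
orthogonal to the boundary at `x` (in the little-o sense). -/
def OutwardNormalAt {n : ℕ} (Ω : Set (Euc n)) (x ν : Euc n) : Prop :=
  ‖ν‖ = 1 ∧
  (∀ᶠ t : ℝ in 𝓝[>] (0 : ℝ), x + t • ν ∉ closure Ω) ∧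
  (∀ᶠ t : ℝ in 𝓝[>] (0 : ℝ), x - t • ν ∈ Ω) ∧
  (fun y : Euc n => (⟪ν, y - x⟫)) =o[𝓝[frontier Ω] x] fun y => ‖y - x‖

/-- `ν` is an outward unit normal field of `Ω` along `∂Ω ∩ s`. -/
def OutwardNormalFieldOn {n : ℕ} (Ω : Set (Euc n)) (ν : Euc n → Euc n)
    (s : Set (Euc n)) : Prop :=
  ∀ x ∈ frontier Ω ∩ s, OutwardNormalAt Ω x (ν x)

/-- The homogeneous Neumann boundary condition `∂h/∂ν = 0` on `∂Ω ∩ s`. -/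
def NeumannBC {n : ℕ} (Ω : Set (Euc n)) (ν : Euc n → Euc n) (h : Euc n → ℝ)
    (s : Set (Euc n)) : Prop :=
  ∀ x ∈ frontier Ω ∩ s, DifferentiableWithinAt ℝ h (closure Ω) x ∧
    fderivWithin ℝ h (closure Ω) x (ν x) = 0

/-- `f : ℝⁿ → ℝ` is `C^{1,1}` with character `M`: differentiable with `M`-Lipschitz
derivative (and itself `M`-Lipschitz). -/
def IsC11FunWith {n : ℕ} (M : ℝ≥0) (f : Euc n → ℝ) : Prop :=
  Differentiable ℝ f ∧ LipschitzWith M f ∧ LipschitzWith M fun x => fderiv ℝ f x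

/-- `Ω ∩ B(x,r)` is, after an isometry `T` of `ℝ^{n+1}` with `T 0 = x`, the region
in the ball above the graph of a function `f` with `f 0 = 0` satisfying `P`. -/
def IsGraphBall {n : ℕ} (Ω : Set (Euc (n + 1))) (x : Euc (n + 1)) (r : ℝ)
    (P : (Euc n → ℝ) → Prop) : Prop :=
  ∃ (T : Euc (n + 1) ≃ᵃⁱ[ℝ] Euc (n + 1)) (f : Euc n → ℝ), P f ∧ T 0 = x ∧ f 0 = 0 ∧
    Ω ∩ ball x r =
      ⇑T '' {y : Euc (n + 1) | y ∈ ball (0 : Euc (n + 1)) r ∧ f (front y) < lastc y}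

/-- `∂Ω ∩ B(x,r) ∈ Lip(τ)`. -/
def LipGraphBall {n : ℕ} (Ω : Set (Euc (n + 1))) (x : Euc (n + 1)) (r τ : ℝ) : Prop :=
  IsGraphBall Ω x r fun f => LipschitzWith (Real.toNNReal τ) f

/-- `Ω` is a `C^{1,1}` domain with character `(ρ, M)`. -/
def IsC11DomainWith {n : ℕ} (Ω : Set (Euc (n + 1))) (ρ : ℝ) (M : ℝ≥0) : Prop :=
  IsOpen Ω ∧ IsConnected Ω ∧ 0 < ρ ∧
    ∀ x ∈ frontier Ω, IsGraphBall Ω x ρ (IsC11FunWith M)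

/-- `Ω` is a `C^{1,1}` domain. -/
def IsC11Domain {n : ℕ} (Ω : Set (Euc (n + 1))) : Prop :=
  ∃ (ρ : ℝ) (M : ℝ≥0), IsC11DomainWith Ω ρ M

/-- `Ω` is a Lipschitz domain with character `(ρ, M)`. -/
def IsLipDomainWith {n : ℕ} (Ω : Set (Euc (n + 1))) (ρ : ℝ) (M : ℝ≥0) : Prop :=
  IsOpen Ω ∧ IsConnected Ω ∧ 0 < ρ ∧
    ∀ x ∈ frontier Ω, IsGraphBall Ω x ρ fun f => LipschitzWith M f

/-- The portion `∂Ω ∩ s` of the boundary has `C^{1,1}` character `(ρ, M)`. -/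
def HasC11CharacterOn {n : ℕ} (Ω : Set (Euc (n + 1))) (s : Set (Euc (n + 1)))
    (ρ : ℝ) (M : ℝ≥0) : Prop :=
  0 < ρ ∧ ∀ x ∈ frontier Ω ∩ s, IsGraphBall Ω x ρ (IsC11FunWith M)

/-- `H_h(x,r) = ∫_{B(x,r) ∩ Ω} h²`. -/
def Hfun {n : ℕ} (Ω : Set (Euc n)) (h : Euc n → ℝ) (x : Euc n) (r : ℝ) : ℝ :=
  ∫ y in ball x r ∩ Ω, h y ^ 2

/-- The doubling index `N_h(x,r) = log (H_h(x,2r) / H_h(x,r))`. -/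
def Nfun {n : ℕ} (Ω : Set (Euc n)) (h : Euc n → ℝ) (x : Euc n) (r : ℝ) : ℝ :=
  Real.log (Hfun Ω h x (2 * r) / Hfun Ω h x r)

/-- Closed axis-parallel cube with centre `c` and side length `s`. -/
def cube {n : ℕ} (c : Euc n) (s : ℝ) : Set (Euc n) :=
  {y : Euc n | ∀ i, |y i - c i| ≤ s / 2}

/-- Maximal doubling index `N*_h(Q)` over the cube of centre `c` and side `s`
(whose diameter is `√n · s`). -/
def Nstar {n : ℕ} (Ω : Set (Euc n)) (h : Euc n → ℝ) (c : Euc n) (s : ℝ) : ℝ :=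
  sSup {N : ℝ | ∃ x ∈ cube c s ∩ closure Ω, ∃ r : ℝ,
    0 < r ∧ r ≤ Real.sqrt n * s ∧ N = Nfun Ω h x r}

/-- The nodal set `Z(h) = {x ∈ Ω : h x = 0}`. -/
def zeroSet {n : ℕ} (Ω : Set (Euc n)) (h : Euc n → ℝ) : Set (Euc n) :=
  {x ∈ Ω | h x = 0}

/-- `sup_s g`. -/
def supOn {α : Type*} (g : α → ℝ) (s : Set α) : ℝ := sSup (g '' s)

/-- The open cylinder `S(x,r,t)` of radius `r` and height `t` whose lower face is
centred at `x`. -/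
def cyl {n : ℕ} (x : Euc (n + 1)) (r t : ℝ) : Set (Euc (n + 1)) :=
  {y : Euc (n + 1) | ‖front y - front x‖ < r ∧ 0 < lastc y - lastc x ∧
    lastc y - lastc x < t}

/-- In the chosen coordinates (centred at `x`, with `e_n = -ν(x)`), `Ω ∩ B(x,R)`
is the region above the graph of the `τ`-Lipschitz function `f` with `f 0 = 0`. -/
def AlignedLipGraphOn {n : ℕ} (Ω : Set (Euc (n + 1))) (x : Euc (n + 1)) (R τ : ℝ)
    (f : Euc n → ℝ) : Prop :=
  LipschitzWith (Real.toNNReal τ) f ∧ f 0 = 0 ∧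
    Ω ∩ ball x R = {y ∈ ball x R | f (front (y - x)) < lastc (y - x)}

/-- `z` is the centre of one of the boundary cubes `q ∈ 𝓑_k(Q)` of the standard
construction for the cube `Q` of centre `xQ` and side `s`: the projection of `z` is
the centre of one of the `2^{k·n}` subcubes of side `s/2^k` of the projection of
`Q`, and `z` lies on `∂Ω`. The cube `q` itself is `cube z (s/2^k)`. -/
def IsBdryCubeCenter {n : ℕ} (Ω : Set (Euc (n + 1))) (xQ : Euc (n + 1)) (s : ℝ)
    (k : ℕ) (z : Euc (n + 1)) : Prop :=
  z ∈ frontier Ω ∧ ∃ a : Fin n → ℕ, (∀ i, a i < 2 ^ k) ∧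
    ∀ i : Fin n, z i.castSucc = xQ i.castSucc - s / 2 + ((a i : ℝ) + 1 / 2) * (s / 2 ^ k)

/-- The infinite cylinder `Ω₀ × ℝ ⊂ ℝ^{n+1}` over `Ω₀ ⊂ ℝⁿ`. -/
def prodDomain {n : ℕ} (Ω₀ : Set (Euc n)) : Set (Euc (n + 1)) :=
  {y : Euc (n + 1) | front y ∈ Ω₀}

/-- The harmonic extension `h(x,t) = e^{√λ t} u(x)` of `u` to `Ω₀ × ℝ`. -/
def hExt {n : ℕ} (lam : ℝ) (u : Euc n → ℝ) : Euc (n + 1) → ℝ :=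
  fun y => Real.exp (Real.sqrt lam * lastc y) * u (front y)


/-- The open upper unit half-ball `B₊ ⊂ ℝ^{n+1}`. -/
def unitHalfBall (n : ℕ) : Set (Euc (n + 1)) :=
  {y : Euc (n + 1) | ‖y‖ < 1 ∧ 0 < lastc y}

/-- The flat face `Γ = {(x',x'') ∈ B̄₊ : x'' = 0}` of the upper half-ball. -/
def flatFace (n : ℕ) : Set (Euc (n + 1)) :=
  {y : Euc (n + 1) | ‖y‖ ≤ 1 ∧ lastc y = 0}

/-! Green's identity is applied to `h` and a Newtonian kernel regularised at a scale `r`, with a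
cutoff that removes a thin collar of the flat face and a rim `98 / 100 ≤ ‖z‖` of the half-ball. The
flux through the rim is a holomorphic function of the height `τ` of the pole, taken complex. For
poles below the flat face the identity expresses it through the Cauchy data on the flat face, so
that it is `O(ε + r ^ 2)`. The three-circle theorem turns this into `O((ε + r ^ 2) ^ γ)` for poles
`x` in the half-ball, where the regularisation recovers `h x` from the flux up to
`O(ε / r ^ (n + 1) + r / lastc x)`. Choosing `r` as a small power of `ε` gives the theorem, unless
`lastc x` is small, in which case the gradient bound suffices. -/

section ComplexAnalysis

variable {E : Type*} [NormedAddCommGroup E] [NormedSpace ℂ E]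

/- Composing with `exp` turns circles into vertical lines, so this is the three lines theorem. -/
theorem norm_le_interp_of_mem_annulus {f : ℂ → E} {r R a b : ℝ} {w : ℂ} (hr : 0 < r) (hrR : r < R)
    (hf : DiffContOnCl ℂ f (norm ⁻¹' Ioo r R)) (ha : ∀ z, ‖z‖ = r → ‖f z‖ ≤ a)
    (hb : ∀ z, ‖z‖ = R → ‖f z‖ ≤ b) (hw : ‖w‖ ∈ Icc r R) :
    ‖f w‖ ≤ a ^ (1 - Real.log (‖w‖ / r) / Real.log (R / r)) *
      b ^ (Real.log (‖w‖ / r) / Real.log (R / r)) := by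
  have hR : 0 < R := hr.trans hrR
  have hw0 : 0 < ‖w‖ := hr.trans_le hw.1
  have maps_exp : MapsTo Complex.exp
      (Complex.HadamardThreeLines.verticalStrip (Real.log r) (Real.log R)) (norm ⁻¹' Ioo r R) := by
    intro z hz
    rw [mem_preimage, Complex.norm_exp]
    exact ⟨(Real.log_lt_iff_lt_exp hr).1 hz.1, (Real.lt_log_iff_exp_lt hR).1 hz.2⟩
  have hcomp : DiffContOnCl ℂ (f ∘ Complex.exp)
      (Complex.HadamardThreeLines.verticalStrip (Real.log r) (Real.log R)) :=
    hf.comp Complex.differentiable_exp.diffContOnCl maps_exp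
  have hbdd : BddAbove ((norm ∘ f ∘ Complex.exp) ''
      Complex.HadamardThreeLines.verticalClosedStrip (Real.log r) (Real.log R)) := by
    have hcompact : IsCompact (closure (norm ⁻¹' Ioo r R : Set ℂ)) :=
      (isBounded_ball.subset fun z hz => mem_ball_zero_iff.2 hz.2).isCompact_closure
    have maps_closure : MapsTo Complex.exp
        (Complex.HadamardThreeLines.verticalClosedStrip (Real.log r) (Real.log R))
        (closure (norm ⁻¹' Ioo r R)) := by
      have h := maps_exp.closure Complex.continuous_exp
      rwa [Complex.HadamardThreeLines.verticalStrip, Complex.closure_preimage_re,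
        closure_Ioo (Real.log_lt_log hr hrR).ne] at h
    refine (hcompact.bddAbove_image hf.continuousOn.norm).mono ?_
    rintro _ ⟨z, hz, rfl⟩
    exact mem_image_of_mem (fun w => ‖f w‖) (maps_closure hz)
  have key := Complex.HadamardThreeLines.norm_le_interp_of_mem_verticalClosedStrip'
    (f := f ∘ Complex.exp) (z := Complex.log w) (Real.log_lt_log hr hrR)
    (by
      rw [Complex.HadamardThreeLines.verticalClosedStrip, mem_preimage, Complex.log_re]
      exact ⟨Real.log_le_log hr hw.1, Real.log_le_log hw0 hw.2⟩)
    hcomp hbdd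
    (fun z hz => ha _ (by rw [Complex.norm_exp, hz, Real.exp_log hr]))
    (fun z hz => hb _ (by rw [Complex.norm_exp, hz, Real.exp_log hR]))
  rwa [Function.comp_apply, Complex.exp_log (norm_pos_iff.1 hw0), Complex.log_re,
    ← Real.log_div hw0.ne' hr.ne', ← Real.log_div hR.ne' hr.ne'] at key

theorem norm_le_mul_rpow_of_mem_annulus {f : ℂ → E} {r ρ R M η : ℝ} {w : ℂ} (hr : 0 < r)
    (hrρ : r < ρ) (hρR : ρ < R) (hf : DiffContOnCl ℂ f (norm ⁻¹' Ioo r R)) (hη : 0 < η)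
    (hη1 : η ≤ 1) (hsmall : ∀ z, ‖z‖ = r → ‖f z‖ ≤ M * η) (hM : ∀ z, ‖z‖ = R → ‖f z‖ ≤ M)
    (hw : ‖w‖ ∈ Icc r ρ) :
    ‖f w‖ ≤ M * η ^ (1 - Real.log (ρ / r) / Real.log (R / r)) := by
  have hrR : r < R := hrρ.trans hρR
  have hM0 : 0 ≤ M := (norm_nonneg _).trans (hM R (Complex.norm_of_nonneg (hr.trans hrR).le))
  have hlog : 0 < Real.log (R / r) := Real.log_pos ((one_lt_div hr).2 hrR)
  have hinterp := norm_le_interp_of_mem_annulus hr hrR hf hsmall hM ⟨hw.1, hw.2.trans hρR.le⟩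
  set s := Real.log (‖w‖ / r) / Real.log (R / r)
  have hwr : 1 ≤ ‖w‖ / r := (one_le_div hr).2 hw.1
  have hs0 : 0 ≤ s := div_nonneg (Real.log_nonneg hwr) hlog.le
  have hsρ : s ≤ Real.log (ρ / r) / Real.log (R / r) :=
    div_le_div_of_nonneg_right (Real.log_le_log (one_pos.trans_le hwr)
      (div_le_div_of_nonneg_right hw.2 hr.le)) hlog.le
  have hρ1 : Real.log (ρ / r) / Real.log (R / r) ≤ 1 :=
    (div_le_one hlog).2 (Real.log_le_log (div_pos (hr.trans hrρ) hr) (by gcongr))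
  calc ‖f w‖ ≤ (M * η) ^ (1 - s) * M ^ s := hinterp
    _ = M ^ (1 - s + s) * η ^ (1 - s) := by
        rw [Real.mul_rpow hM0 hη.le, Real.rpow_add_of_nonneg hM0 (by linarith) hs0]; ring
    _ = M * η ^ (1 - s) := by rw [sub_add_cancel, Real.rpow_one]
    _ ≤ M * η ^ (1 - Real.log (ρ / r) / Real.log (R / r)) :=
        mul_le_mul_of_nonneg_left (Real.rpow_le_rpow_of_exponent_ge hη hη1 (by linarith)) hM0

theorem exists_norm_le_mul_rpow_of_small_on_closedBall {β ρ : ℝ} (hβ : 0 < β) (hβρ : β < ρ)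
    (hρ : ρ < 1) : ∃ γ : ℝ, 0 < γ ∧ γ < 1 ∧ ∀ {f : ℂ → E} {R M η : ℝ}, 0 < R → 0 < η →
      DifferentiableOn ℂ f (ball 0 R) → (∀ w ∈ ball 0 R, ‖f w‖ ≤ M) →
      (∀ w ∈ closedBall 0 (β * R), ‖f w‖ ≤ M * η) →
      ∀ w ∈ closedBall 0 (ρ * R), ‖f w‖ ≤ M * η ^ γ := by
  obtain ⟨κ, hρκ, hκ⟩ := exists_between hρ
  have hlogβκ : 0 < Real.log (κ / β) := Real.log_pos ((one_lt_div hβ).2 (hβρ.trans hρκ))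
  have hlogβρ : 0 < Real.log (ρ / β) := Real.log_pos ((one_lt_div hβ).2 hβρ)
  have hlog : Real.log (ρ / β) < Real.log (κ / β) :=
    Real.log_lt_log (div_pos (hβ.trans hβρ) hβ) (by gcongr)
  have hγ0 : 0 < 1 - Real.log (ρ / β) / Real.log (κ / β) := sub_pos.2 ((div_lt_one hlogβκ).2 hlog)
  have hγ1 : 1 - Real.log (ρ / β) / Real.log (κ / β) < 1 := sub_lt_self 1 (div_pos hlogβρ hlogβκ)
  refine ⟨_, hγ0, hγ1, fun {f R M η} hR hη hf hM hsmall w hw => ?_⟩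
  rw [mem_closedBall_zero_iff] at hw
  have hM0 : 0 ≤ M := (norm_nonneg _).trans (hM 0 (mem_ball_self hR))
  rcases le_or_gt 1 η with hη1 | hη1
  · exact (hM w (mem_ball_zero_iff.2 (by nlinarith))).trans
      (le_mul_of_one_le_right hM0 (Real.one_le_rpow hη1 hγ0.le))
  rcases le_or_gt ‖w‖ (β * R) with hwβ | hwβ
  · refine (hsmall w (mem_closedBall_zero_iff.2 hwβ)).trans (mul_le_mul_of_nonneg_left ?_ hM0)
    exact Real.self_le_rpow_of_le_one hη.le hη1.le hγ1.le
  have hκR : closedBall (0 : ℂ) (κ * R) ⊆ ball 0 R := closedBall_subset_ball (by nlinarith)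
  have hinterp := norm_le_mul_rpow_of_mem_annulus (ρ := ρ * R) (R := κ * R) (mul_pos hβ hR)
    (by gcongr) (by gcongr)
    ((hf.mono hκR).diffContOnCl_ball subset_rfl |>.mono fun z hz => mem_ball_zero_iff.2 hz.2)
    hη hη1.le (fun z hz => hsmall z (mem_closedBall_zero_iff.2 hz.le))
    (fun z hz => hM z (hκR (mem_closedBall_zero_iff.2 hz.le))) ⟨hwβ.le, hw⟩
  rwa [mul_div_mul_right _ _ hR.ne', mul_div_mul_right _ _ hR.ne'] at hinterp

variable {α : Type*} [MeasurableSpace α] {μ : Measure α}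

theorem aestronglyMeasurable_deriv_of_differentiableOn {U : Set ℂ} (hU : IsOpen U) {f : ℂ → α → E}
    (hf : ∀ τ ∈ U, AEStronglyMeasurable (f τ) μ)
    (hd : ∀ᵐ z ∂μ, DifferentiableOn ℂ (f · z) U) {τ : ℂ} (hτ : τ ∈ U) :
    AEStronglyMeasurable (fun z => deriv (f · z) τ) μ := by
  have hU0 : ∀ᶠ s in 𝓝[≠] (0 : ℂ), τ + s ∈ U :=
    nhdsWithin_le_nhds ((continuous_const.add continuous_id).continuousAt.preimage_mem_nhds
      (hU.mem_nhds (by simpa using hτ)))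
  obtain ⟨s, hs⟩ := exists_seq_tendsto (𝓝[≠] (0 : ℂ))
  obtain ⟨N, hN⟩ := (hs.eventually hU0).exists_forall_of_atTop
  refine aestronglyMeasurable_of_tendsto_ae atTop
    (f := fun k z => (s (k + N))⁻¹ • (f (τ + s (k + N)) z - f τ z)) (fun k => ?_) ?_
  · exact ((hf _ (hN _ (Nat.le_add_left N k))).sub (hf τ hτ)).const_smul ((s (k + N))⁻¹)
  · filter_upwards [hd] with z hz
    exact ((hz τ hτ).differentiableAt (hU.mem_nhds hτ)).hasDerivAt.tendsto_slope_zero.comp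
      ((tendsto_add_atTop_iff_nat N).2 hs)

theorem differentiableOn_integral_of_norm_le [CompleteSpace E] [IsFiniteMeasure μ] {U : Set ℂ}
    (hU : IsOpen U) {f : ℂ → α → E} {M : ℝ} (hf : ∀ τ ∈ U, AEStronglyMeasurable (f τ) μ)
    (hd : ∀ᵐ z ∂μ, DifferentiableOn ℂ (f · z) U) (hM : ∀ᵐ z ∂μ, ∀ τ ∈ U, ‖f τ z‖ ≤ M) :
    DifferentiableOn ℂ (fun τ => ∫ z, f τ z ∂μ) U := by
  intro τ hτ
  obtain ⟨ρ, hρ, hρU⟩ := Metric.isOpen_iff.1 hU τ hτ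
  have hsub : ∀ w ∈ ball τ (ρ / 2), closedBall w (ρ / 4) ⊆ U := fun w hw =>
    (closedBall_subset_ball' (by linarith [mem_ball.1 hw])).trans hρU
  have hsub' : ∀ w ∈ ball τ (ρ / 2), w ∈ U := fun w hw =>
    hsub w hw (mem_closedBall_self (by positivity))
  have hderiv := hasDerivAt_integral_of_dominated_loc_of_deriv_le (μ := μ) (F := f) (x₀ := τ)
    (F' := fun τ z => deriv (f · z) τ) (s := ball τ (ρ / 2)) (bound := fun _ => M / (ρ / 4))
    (ball_mem_nhds _ (by positivity)) (mem_of_superset (hU.mem_nhds hτ) hf)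
    (.of_bound (hf τ hτ) M (hM.mono fun z hz => hz τ hτ))
    (aestronglyMeasurable_deriv_of_differentiableOn hU hf hd hτ) ?cauchy (integrable_const _) ?diff
  · exact hderiv.2.differentiableAt.differentiableWithinAt
  case cauchy =>
    filter_upwards [hd, hM] with z hdz hMz w hw
    exact Complex.norm_deriv_le_of_forall_mem_sphere_norm_le (by positivity)
      ((hdz.mono (hsub w hw)).diffContOnCl_ball subset_rfl)
      fun y hy => hMz y (hsub w hw (sphere_subset_closedBall hy))
  case diff =>
    filter_upwards [hd] with z hdz w hw
    exact ((hdz w (hsub' w hw)).differentiableAt (hU.mem_nhds (hsub' w hw))).hasDerivAt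

end ComplexAnalysis

theorem exists_abs_deriv_smoothTransition_le :
    ∃ B : ℝ, 0 < B ∧ ∀ s, |deriv Real.smoothTransition s| ≤ B := by
  have hcont : Continuous (deriv Real.smoothTransition) :=
    Real.smoothTransition.contDiff.continuous_deriv (n := 1) le_rfl
  obtain ⟨B, hB⟩ := isCompact_Icc.exists_bound_of_continuousOn (s := Icc (0 : ℝ) 1)
    hcont.continuousOn
  refine ⟨|B| + 1, by positivity, fun s => ?_⟩
  rcases lt_or_ge s 0 with hs0 | hs0
  · have hzero : Real.smoothTransition =ᶠ[𝓝 s] fun _ => 0 := by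
      filter_upwards [Iio_mem_nhds hs0] with y hy
      exact Real.smoothTransition.zero_of_nonpos (le_of_lt hy)
    rw [hzero.deriv_eq, deriv_const, abs_zero]
    positivity
  rcases lt_or_ge 1 s with hs1 | hs1
  · have hone : Real.smoothTransition =ᶠ[𝓝 s] fun _ => 1 := by
      filter_upwards [Ioi_mem_nhds hs1] with y hy
      exact Real.smoothTransition.one_of_one_le (le_of_lt hy)
    rw [hone.deriv_eq, deriv_const, abs_zero]
    positivity
  · linarith [(Real.norm_eq_abs _).symm.trans_le (hB s ⟨hs0, hs1⟩), le_abs_self B]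

theorem exists_contDiff_step :
    ∃ B : ℝ, 0 < B ∧ ∀ δ > 0, ∃ θ : ℝ → ℝ, ContDiff ℝ 1 θ ∧ (∀ s, θ s ∈ Icc 0 1) ∧
      (∀ s ≤ δ / 2, θ s = 0) ∧ (∀ s ≥ δ, θ s = 1) ∧ ∀ s, |deriv θ s| ≤ B / δ := by
  obtain ⟨B, hB, hderiv⟩ := exists_abs_deriv_smoothTransition_le
  refine ⟨2 * B, by positivity, fun δ hδ =>
    ⟨fun s => Real.smoothTransition (2 / δ * s - 1),
      Real.smoothTransition.contDiff.comp (by fun_prop),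
      fun s => ⟨Real.smoothTransition.nonneg _, Real.smoothTransition.le_one _⟩,
      fun s hs => Real.smoothTransition.zero_of_nonpos ?_,
      fun s hs => Real.smoothTransition.one_of_one_le ?_, fun s => ?_⟩⟩
  · rw [sub_nonpos, div_mul_eq_mul_div, div_le_one hδ]
    linarith
  · rw [le_sub_iff_add_le, div_mul_eq_mul_div, le_div_iff₀ hδ]
    linarith
  · have hcomp := (Real.smoothTransition.contDiff (n := 1).differentiable one_ne_zero
      (2 / δ * s - 1)).hasDerivAt.comp s (((hasDerivAt_id s).const_mul (2 / δ)).sub_const 1)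
    simp only [id, Function.comp_def] at hcomp
    rw [hcomp.deriv, mul_one, abs_mul, abs_of_pos (div_pos two_pos hδ)]
    calc |deriv Real.smoothTransition (2 / δ * s - 1)| * (2 / δ) ≤ B * (2 / δ) := by
          gcongr
          exact hderiv _
      _ = 2 * B / δ := by ring

section ApproximateIdentity

theorem abs_integral_comp_mul_sub_le {E : Type*} [NormedAddCommGroup E] [NormedSpace ℝ E]
    [MeasurableSpace E] [BorelSpace E] {μ : Measure E} {w G : E → ℝ} {x : E} {H L r : ℝ}
    (hw : Integrable w μ) (hvw : Integrable (fun v => ‖v‖ * w v) μ) (hw0 : ∀ v, 0 ≤ w v)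
    (hr : 0 ≤ r) (hG : Measurable G) (hGH : ∀ z, |G z - H| ≤ L * ‖z - x‖) :
    |(∫ v, G (x + r • v) * w v ∂μ) - (∫ v, w v ∂μ) * H| ≤ (∫ v, ‖v‖ * w v ∂μ) * L * r := by
  have hbound : ∀ v, ‖(G (x + r • v) - H) * w v‖ ≤ L * r * (‖v‖ * w v) := fun v => by
    rw [norm_mul, Real.norm_eq_abs, Real.norm_of_nonneg (hw0 v)]
    calc |G (x + r • v) - H| * w v ≤ L * ‖x + r • v - x‖ * w v := by
          gcongr
          exacts [hw0 v, hGH _]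
      _ = L * r * (‖v‖ * w v) := by
          rw [add_sub_cancel_left, norm_smul, Real.norm_of_nonneg hr]; ring
  have hmeas : AEStronglyMeasurable (fun v => (G (x + r • v) - H) * w v) μ :=
    ((hG.comp (by fun_prop)).sub_const H).aestronglyMeasurable.mul hw.aestronglyMeasurable
  have hint : Integrable (fun v => (G (x + r • v) - H) * w v) μ :=
    (hvw.const_mul (L * r)).mono' hmeas (.of_forall hbound)
  have hsplit : ∫ v, G (x + r • v) * w v ∂μ =
      (∫ v, (G (x + r • v) - H) * w v ∂μ) + (∫ v, w v ∂μ) * H := by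
    rw [← integral_mul_const, ← integral_add hint (hw.mul_const H)]
    exact integral_congr_ae (.of_forall fun v => by ring)
  rw [hsplit, add_sub_cancel_right]
  calc |∫ v, (G (x + r • v) - H) * w v ∂μ| ≤ ∫ v, L * r * (‖v‖ * w v) ∂μ :=
        norm_integral_le_of_norm_le (hvw.const_mul _) (.of_forall hbound)
    _ = (∫ v, ‖v‖ * w v ∂μ) * L * r := by rw [integral_const_mul]; ring

variable {E : Type*} [NormedAddCommGroup E] [InnerProductSpace ℝ E] [FiniteDimensional ℝ E]
  [MeasurableSpace E] [BorelSpace E] (μ : Measure E) [μ.IsAddHaarMeasure]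

open Module (finrank)

theorem integrable_one_add_norm_sq_rpow :
    Integrable (fun v : E => (1 + ‖v‖ ^ 2) ^ (-(finrank ℝ E / 2 : ℝ) - 1)) μ := by
  refine (integrable_rpow_neg_one_add_norm_sq (μ := μ) (r := (finrank ℝ E : ℝ) + 2)
    (by linarith)).congr (.of_forall fun v => ?_)
  ring_nf

theorem integrable_norm_mul_one_add_norm_sq_rpow :
    Integrable (fun v : E => ‖v‖ * (1 + ‖v‖ ^ 2) ^ (-(finrank ℝ E / 2 : ℝ) - 1)) μ := by
  have hint := integrable_rpow_neg_one_add_norm_sq (μ := μ) (r := (finrank ℝ E : ℝ) + 1)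
    (by linarith)
  have hcont : Continuous fun v : E => ‖v‖ * (1 + ‖v‖ ^ 2) ^ (-(finrank ℝ E / 2 : ℝ) - 1) :=
    continuous_norm.mul ((by fun_prop : Continuous fun v : E => 1 + ‖v‖ ^ 2).rpow_const
      fun v => .inl (by positivity))
  refine hint.mono' hcont.aestronglyMeasurable (.of_forall fun v => ?_)
  have hsqrt : ‖v‖ ≤ (1 + ‖v‖ ^ 2) ^ (1 / 2 : ℝ) := by
    rw [← Real.sqrt_eq_rpow]
    exact Real.le_sqrt_of_sq_le (by linarith)
  rw [Real.norm_of_nonneg (by positivity)]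
  calc ‖v‖ * (1 + ‖v‖ ^ 2) ^ (-(finrank ℝ E / 2 : ℝ) - 1)
      ≤ (1 + ‖v‖ ^ 2) ^ (1 / 2 : ℝ) * (1 + ‖v‖ ^ 2) ^ (-(finrank ℝ E / 2 : ℝ) - 1) := by gcongr
    _ = (1 + ‖v‖ ^ 2) ^ (-((finrank ℝ E : ℝ) + 1) / 2) := by
        rw [← Real.rpow_add (by positivity)]
        congr 1
        ring

theorem integral_mul_norm_sub_sq_add_sq_rpow (G : E → ℝ) (x : E) {r : ℝ} (hr : 0 < r) :
    ∫ z, G z * (r ^ 2 * (‖z - x‖ ^ 2 + r ^ 2) ^ (-(finrank ℝ E / 2 : ℝ) - 1)) ∂μ =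
      ∫ v, G (x + r • v) * (1 + ‖v‖ ^ 2) ^ (-(finrank ℝ E / 2 : ℝ) - 1) ∂μ := by
  set p : ℝ := finrank ℝ E / 2 with hp
  have hscale : r ^ finrank ℝ E * (r ^ 2 * (r ^ 2) ^ (-p - 1)) = 1 := by
    rw [← Real.rpow_natCast r (finrank ℝ E), ← Real.rpow_natCast r 2, ← Real.rpow_mul hr.le,
      ← Real.rpow_add hr, ← Real.rpow_add hr, hp]
    convert Real.rpow_zero r using 2
    push_cast
    ring
  have hcomp := μ.integral_comp_smul (fun v => G (x + v) *
    (r ^ 2 * (‖v‖ ^ 2 + r ^ 2) ^ (-p - 1))) r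
  rw [← integral_add_left_eq_self _ x]
  simp only [add_sub_cancel_left]
  rw [abs_of_pos (by positivity), smul_eq_mul, eq_inv_mul_iff_mul_eq₀ (by positivity)] at hcomp
  rw [← hcomp, ← integral_const_mul]
  refine integral_congr_ae (.of_forall fun v => ?_)
  have hv : ‖r • v‖ ^ 2 + r ^ 2 = r ^ 2 * (1 + ‖v‖ ^ 2) := by
    rw [norm_smul, Real.norm_of_nonneg hr.le]; ring
  dsimp only
  rw [hv, Real.mul_rpow (by positivity) (by positivity)]
  linear_combination (G (x + r • v) * (1 + ‖v‖ ^ 2) ^ (-p - 1)) * hscale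

theorem exists_abs_integral_mul_rpow_sub_le :
    ∃ c : ℝ, 0 < c ∧ ∃ C : ℝ, 0 ≤ C ∧ ∀ {G : E → ℝ} {x : E} {H L r : ℝ}, 0 < r → Measurable G →
      (∀ z, |G z - H| ≤ L * ‖z - x‖) →
      |(∫ z, G z * (r ^ 2 * (‖z - x‖ ^ 2 + r ^ 2) ^ (-(finrank ℝ E / 2 : ℝ) - 1)) ∂μ) - c * H| ≤
        C * L * r := by
  have hw := integrable_one_add_norm_sq_rpow μ
  have hvw := integrable_norm_mul_one_add_norm_sq_rpow μ
  have hw0 : ∀ v : E, 0 < (1 + ‖v‖ ^ 2) ^ (-(finrank ℝ E / 2 : ℝ) - 1) := fun v => by positivity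
  refine ⟨∫ v, (1 + ‖v‖ ^ 2) ^ (-(finrank ℝ E / 2 : ℝ) - 1) ∂μ, ?_,
    ∫ v, ‖v‖ * (1 + ‖v‖ ^ 2) ^ (-(finrank ℝ E / 2 : ℝ) - 1) ∂μ,
    integral_nonneg fun v => mul_nonneg (norm_nonneg v) (hw0 v).le, fun hr hG hGH => ?_⟩
  · rw [integral_pos_iff_support_of_nonneg (fun v => (hw0 v).le) hw,
      Function.support_eq_univ fun v => (hw0 v).ne']
    exact Measure.measure_univ_pos.2 (NeZero.ne μ)
  · rw [integral_mul_norm_sub_sq_add_sq_rpow μ _ _ hr]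
    exact abs_integral_comp_mul_sub_le hw hvw (fun v => (hw0 v).le) hr.le hG hGH

end ApproximateIdentity

section CpowPrimitive

/-- An antiderivative of `ζ ↦ ζ ^ s` on the slit plane; for `s = -1` it is the logarithm. -/
def cpowPrimitive (s : ℝ) (ζ : ℂ) : ℂ :=
  if s = -1 then Complex.log ζ else ζ ^ ((s : ℂ) + 1) / (s + 1)

theorem hasDerivAt_cpowPrimitive (s : ℝ) {ζ : ℂ} (hζ : ζ ∈ Complex.slitPlane) :
    HasDerivAt (cpowPrimitive s) (ζ ^ (s : ℂ)) ζ := by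
  unfold cpowPrimitive
  split_ifs with hs
  · simpa [hs, Complex.cpow_neg_one] using Complex.hasDerivAt_log hζ
  · have hs1 : (s : ℂ) + 1 ≠ 0 := by
      rw [Ne, ← eq_neg_iff_add_eq_zero]
      exact_mod_cast hs
    have h := ((hasDerivAt_id ζ).cpow_const (c := (s : ℂ) + 1) hζ).div_const ((s : ℂ) + 1)
    simpa only [id, add_sub_cancel_right, mul_one, mul_div_cancel_left₀ _ hs1] using h

theorem contDiffOn_cpowPrimitive (s : ℝ) {k : WithTop ℕ∞} :
    ContDiffOn ℂ k (cpowPrimitive s) Complex.slitPlane :=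
  DifferentiableOn.contDiffOn (fun _ hζ =>
    (hasDerivAt_cpowPrimitive s hζ).differentiableAt.differentiableWithinAt)
    Complex.isOpen_slitPlane

theorem measurable_cpowPrimitive (s : ℝ) : Measurable (cpowPrimitive s) := by
  unfold cpowPrimitive
  split_ifs
  · exact Complex.measurable_log
  · fun_prop

variable {s a : ℝ} {ζ : ℂ}

theorem norm_cpow_le_of_le_re (hs : s ≤ 0) (ha : 0 < a) (hζ : a ≤ ζ.re) :
    ‖ζ ^ (s : ℂ)‖ ≤ a ^ s := by
  rw [Complex.norm_cpow_real]
  exact Real.rpow_le_rpow_of_nonpos ha (hζ.trans (Complex.re_le_norm ζ)) hs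

theorem norm_cpowPrimitive_le_of_le_re (hs : s ≤ 0) (ha : 0 < a) (ha1 : a ≤ 1) (hζ : a ≤ ζ.re) :
    ‖cpowPrimitive s ζ‖ ≤ (‖cpowPrimitive s 1‖ + ‖ζ‖ + 1) * a ^ s := by
  have hmean : ‖cpowPrimitive s ζ - cpowPrimitive s 1‖ ≤ a ^ s * ‖ζ - 1‖ :=
    (convex_halfSpace_re_ge a).norm_image_sub_le_of_norm_hasDerivWithin_le
      (fun w hw => (hasDerivAt_cpowPrimitive s (.inl (ha.trans_le hw))).hasDerivWithinAt)
      (fun w hw => norm_cpow_le_of_le_re hs ha hw) (show a ≤ (1 : ℂ).re by simpa using ha1) hζ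
  have hone : 1 ≤ a ^ s := Real.one_le_rpow_of_pos_of_le_one_of_nonpos ha ha1 hs
  calc ‖cpowPrimitive s ζ‖
      ≤ ‖cpowPrimitive s 1‖ + ‖cpowPrimitive s ζ - cpowPrimitive s 1‖ :=
        norm_le_insert' _ _
    _ ≤ ‖cpowPrimitive s 1‖ * a ^ s + a ^ s * (‖ζ‖ + 1) := by
        refine add_le_add (le_mul_of_one_le_right (norm_nonneg _) hone) (hmean.trans ?_)
        gcongr
        simpa using norm_sub_le ζ 1
    _ = (‖cpowPrimitive s 1‖ + ‖ζ‖ + 1) * a ^ s := by ring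

end CpowPrimitive

section GreenIdentity

variable {E F : Type*} [NormedAddCommGroup E] [NormedSpace ℝ E]
  [NormedAddCommGroup F] [NormedSpace ℝ F] {U : Set E} {ξ h : E → ℝ} {g w : E → F}

theorem contDiff_smul_of_tsupport_subset {k : WithTop ℕ∞} (hU : IsOpen U) (hξ : ContDiff ℝ k ξ)
    (hξU : tsupport ξ ⊆ U) (hg : ContDiffOn ℝ k g U) : ContDiff ℝ k fun z => ξ z • g z := by
  rw [contDiff_iff_contDiffAt]
  intro z
  by_cases hz : z ∈ U
  · exact hξ.contDiffAt.smul (hg.contDiffAt (hU.mem_nhds hz))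
  · refine (contDiffAt_const (c := (0 : F))).congr_of_eventuallyEq ?_
    filter_upwards [notMem_tsupport_iff_eventuallyEq.1 fun h => hz (hξU h)] with y hy
    rw [hy, Pi.zero_apply, zero_smul]

/-- The component along `u` of the field `h ∇w - w ∇h` of Green's second identity. -/
def greenFlux (h : E → ℝ) (w : E → F) (z u : E) : F :=
  h z • fderiv ℝ w z u - fderiv ℝ h z u • w z

variable [FiniteDimensional ℝ E] [MeasurableSpace E] [BorelSpace E] {μ : Measure E}
  [μ.IsAddHaarMeasure]

theorem integral_fderiv_eq_zero_of_hasCompactSupport (hg : ContDiff ℝ 1 g)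
    (hgc : HasCompactSupport g) (u : E) : ∫ z, fderiv ℝ g z u ∂μ = 0 := by
  have hderiv : Continuous fun z => fderiv ℝ g z u :=
    (hg.continuous_fderiv one_ne_zero).clm_apply continuous_const
  have h := integral_smul_fderiv_eq_neg_fderiv_smul_of_integrable (μ := μ) (v := u)
    (f := fun _ => (1 : ℝ)) (g := g) (by simp)
    (by simpa using hderiv.integrable_of_hasCompactSupport (hgc.fderiv_apply ℝ u))
    (by simpa using hg.continuous.integrable_of_hasCompactSupport hgc)
    (fun _ _ => differentiableAt_const _) fun z _ => hg.differentiable one_ne_zero z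
  simpa using h

variable {ι : Type*} [Fintype ι]

theorem setIntegral_smul_sum_fderiv_add_eq_zero (hU : IsOpen U) (v : ι → E) (hξ : ContDiff ℝ 1 ξ)
    (hξc : HasCompactSupport ξ) (hξU : tsupport ξ ⊆ U) {X : ι → E → F}
    (hX : ∀ i, ContDiffOn ℝ 1 (X i) U) :
    ∫ z in U, (ξ z • ∑ i, fderiv ℝ (X i) z (v i) + ∑ i, fderiv ℝ ξ z (v i) • X i z) ∂μ = 0 := by
  have hξX : ∀ i, ContDiff ℝ 1 fun z => ξ z • X i z := fun i =>
    contDiff_smul_of_tsupport_subset hU hξ hξU (hX i)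
  have hξXc : ∀ i, HasCompactSupport fun z => ξ z • X i z := fun i => hξc.smul_right
  have hint : ∀ i, Integrable (fun z => fderiv ℝ (fun y => ξ y • X i y) z (v i)) μ := fun i =>
    (((hξX i).continuous_fderiv one_ne_zero).clm_apply continuous_const)
      |>.integrable_of_hasCompactSupport ((hξXc i).fderiv_apply ℝ (v i))
  have hprod : ∀ z ∈ U, ξ z • ∑ i, fderiv ℝ (X i) z (v i) + ∑ i, fderiv ℝ ξ z (v i) • X i z =
      ∑ i, fderiv ℝ (fun y => ξ y • X i y) z (v i) := fun z hz => by
    rw [Finset.smul_sum, ← Finset.sum_add_distrib]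
    refine Finset.sum_congr rfl fun i _ => ?_
    rw [fderiv_fun_smul (hξ.differentiable one_ne_zero z)
      (((hX i).contDiffAt (hU.mem_nhds hz)).differentiableAt one_ne_zero)]
    simp
  have hzero : ∀ z ∉ U, ∑ i, fderiv ℝ (fun y => ξ y • X i y) z (v i) = 0 := fun z hz => by
    refine Finset.sum_eq_zero fun i _ => ?_
    have hev : (fun y => ξ y • X i y) =ᶠ[𝓝 z] fun _ => 0 := by
      filter_upwards [notMem_tsupport_iff_eventuallyEq.1 fun h => hz (hξU h)] with y hy
      rw [hy, Pi.zero_apply, zero_smul]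
    rw [hev.fderiv_eq, fderiv_const_apply, zero_apply]
  rw [setIntegral_congr_fun hU.measurableSet hprod,
    setIntegral_eq_integral_of_forall_compl_eq_zero hzero, integral_finsetSum _ fun i _ => hint i]
  exact Finset.sum_eq_zero fun i _ =>
    integral_fderiv_eq_zero_of_hasCompactSupport (hξX i) (hξXc i) _

theorem setIntegral_cutoff_green (hU : IsOpen U) (v : ι → E) (hξ : ContDiff ℝ 1 ξ)
    (hξc : HasCompactSupport ξ) (hξU : tsupport ξ ⊆ U) (hh : ContDiffOn ℝ 2 h U)
    (hharm : ∀ z ∈ U, ∑ i, fderiv ℝ (fun y => fderiv ℝ h y (v i)) z (v i) = 0)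
    (hw : ContDiffOn ℝ 2 w U) :
    ∫ z in U, (ξ z • h z • ∑ i, fderiv ℝ (fun y => fderiv ℝ w y (v i)) z (v i) +
      ∑ i, fderiv ℝ ξ z (v i) • greenFlux h w z (v i)) ∂μ = 0 := by
  unfold greenFlux
  have hdh : ∀ i, ContDiffOn ℝ 1 (fun y => fderiv ℝ h y (v i)) U := fun i =>
    (hh.fderiv_of_isOpen hU le_rfl).clm_apply contDiffOn_const
  have hdw : ∀ i, ContDiffOn ℝ 1 (fun y => fderiv ℝ w y (v i)) U := fun i =>
    (hw.fderiv_of_isOpen hU le_rfl).clm_apply contDiffOn_const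
  have hh1 := hh.of_le one_le_two
  have hw1 := hw.of_le one_le_two
  have hX : ∀ i, ContDiffOn ℝ 1
      (fun z => h z • fderiv ℝ w z (v i) - fderiv ℝ h z (v i) • w z) U := fun i =>
    (hh1.smul (hdw i)).sub ((hdh i).smul hw1)
  rw [← setIntegral_smul_sum_fderiv_add_eq_zero (μ := μ) hU v hξ hξc hξU hX]
  refine setIntegral_congr_fun hU.measurableSet fun z hz => ?_
  have diff_h := (hh1.differentiableOn one_ne_zero).differentiableAt (hU.mem_nhds hz)
  have diff_w := (hw1.differentiableOn one_ne_zero).differentiableAt (hU.mem_nhds hz)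
  have diff_dh := fun i => ((hdh i).differentiableOn one_ne_zero).differentiableAt (hU.mem_nhds hz)
  have diff_dw := fun i => ((hdw i).differentiableOn one_ne_zero).differentiableAt (hU.mem_nhds hz)
  have hdiv : ∀ i, fderiv ℝ (fun z => h z • fderiv ℝ w z (v i) - fderiv ℝ h z (v i) • w z) z (v i) =
      h z • fderiv ℝ (fun y => fderiv ℝ w y (v i)) z (v i) -
        fderiv ℝ (fun y => fderiv ℝ h y (v i)) z (v i) • w z := fun i => by
    rw [fderiv_fun_sub (diff_h.fun_smul (diff_dw i)) ((diff_dh i).fun_smul diff_w),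
      fderiv_fun_smul diff_h (diff_dw i), fderiv_fun_smul (diff_dh i) diff_w]
    simp only [sub_apply, add_apply, smul_apply, ContinuousLinearMap.smulRight_apply]
    abel
  simp_rw [hdiv]
  rw [Finset.sum_sub_distrib, ← Finset.sum_smul, hharm z hz, zero_smul, sub_zero, Finset.smul_sum]

end GreenIdentity

section Kernel

variable {E : Type*} [NormedAddCommGroup E] [InnerProductSpace ℝ E]

/-- The extension of `‖z - (x₀ + τ • e)‖ ^ 2 + r ^ 2` from real to complex `τ`. -/
def complexDistSq (x₀ e : E) (r : ℝ) (τ : ℂ) (z : E) : ℂ :=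
  ‖z - x₀‖ ^ 2 - 2 * τ * ⟪e, z - x₀⟫ + τ ^ 2 * ‖e‖ ^ 2 + r ^ 2

/-- The extension of the functional `⟪z - (x₀ + τ • e), ·⟫` from real to complex `τ`; it is half the
derivative of `complexDistSq x₀ e r τ` at `z`. -/
def complexInner (x₀ e : E) (τ : ℂ) (z : E) : E →L[ℝ] ℂ :=
  Complex.ofRealCLM ∘L innerSL ℝ (z - x₀) - τ • (Complex.ofRealCLM ∘L innerSL ℝ e)

variable {x₀ e : E} {r : ℝ} {τ : ℂ}

theorem complexInner_apply (x₀ e : E) (τ : ℂ) (z u : E) :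
    complexInner x₀ e τ z u = ⟪z - x₀, u⟫ - τ * ⟪e, u⟫ := rfl

theorem complexDistSq_ofReal (x₀ e : E) (r t : ℝ) (z : E) :
    complexDistSq x₀ e r t z = ((‖z - (x₀ + t • e)‖ ^ 2 + r ^ 2 : ℝ) : ℂ) := by
  rw [← sub_sub, norm_sub_sq_real, inner_smul_right, norm_smul, mul_pow, Real.norm_eq_abs, sq_abs,
    real_inner_comm, complexDistSq]
  push_cast
  ring

section Estimates

variable {z : E}

theorem norm_complexDistSq_le (he : ‖e‖ = 1) :
    ‖complexDistSq x₀ e r τ z‖ ≤ (‖z - x₀‖ + ‖τ‖) ^ 2 + r ^ 2 := by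
  have hinner : |⟪e, z - x₀⟫| ≤ ‖z - x₀‖ := by simpa [he] using abs_real_inner_le_norm e (z - x₀)
  have htri : ‖complexDistSq x₀ e r τ z‖ ≤
      ‖((‖z - x₀‖ : ℂ)) ^ 2‖ + ‖2 * τ * ⟪e, z - x₀⟫‖ + ‖τ ^ 2 * (‖e‖ : ℂ) ^ 2‖ + ‖(r : ℂ) ^ 2‖ :=
    (norm_add_le _ _).trans (add_le_add_left ((norm_add_le _ _).trans
      (add_le_add_left (norm_sub_le _ _) _)) _)
  simp only [norm_mul, norm_pow, Complex.norm_real, Complex.norm_ofNat, he,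
    Real.norm_eq_abs, sq_abs] at htri
  nlinarith [mul_le_mul_of_nonneg_left hinner (norm_nonneg τ)]

theorem norm_complexInner_le (he : ‖e‖ = 1) (u : E) :
    ‖complexInner x₀ e τ z u‖ ≤ (‖z - x₀‖ + ‖τ‖) * ‖u‖ := by
  rw [complexInner_apply]
  refine (norm_sub_le _ _).trans ?_
  rw [norm_mul, Complex.norm_real, Complex.norm_real, add_mul]
  refine add_le_add (norm_inner_le_norm _ _) ?_
  gcongr
  simpa [he] using norm_inner_le_norm (𝕜 := ℝ) e u

theorem le_re_complexDistSq (he : ‖e‖ = 1) (hτ : ‖τ‖ ≤ 2 / 5 * ‖z - x₀‖) :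
    ‖z - x₀‖ ^ 2 / 4 ≤ (complexDistSq x₀ e r τ z).re := by
  have hinner : |⟪e, z - x₀⟫| ≤ ‖z - x₀‖ := by simpa [he] using abs_real_inner_le_norm e (z - x₀)
  have hre : |τ.re| ≤ ‖τ‖ := Complex.abs_re_le_norm τ
  have hnorm : ‖τ‖ ^ 2 = τ.re ^ 2 + τ.im ^ 2 := by rw [Complex.sq_norm, Complex.normSq_apply]; ring
  have hprod : τ.re * ⟪e, z - x₀⟫ ≤ |τ.re| * ‖z - x₀‖ :=
    (le_abs_self _).trans (by rw [abs_mul]; gcongr)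
  have hq : (complexDistSq x₀ e r τ z).re =
      ‖z - x₀‖ ^ 2 - 2 * (τ.re * ⟪e, z - x₀⟫) + (τ.re ^ 2 - τ.im ^ 2) + r ^ 2 := by
    simp only [complexDistSq, pow_two, ← Complex.ofReal_mul, he, Complex.ofReal_one, mul_one,
      Complex.add_re, Complex.sub_re, Complex.ofReal_re, Complex.mul_re, Complex.re_ofNat,
      Complex.im_ofNat, zero_mul, sub_zero, Complex.mul_im, add_zero, Complex.ofReal_im, mul_zero]
    ring
  rw [hq]
  nlinarith [sq_abs τ.re, sq_nonneg r, norm_nonneg τ, abs_nonneg τ.re]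

end Estimates

theorem differentiable_complexDistSq (x₀ e : E) (r : ℝ) (z : E) :
    Differentiable ℂ (complexDistSq x₀ e r · z) := by
  unfold complexDistSq
  fun_prop

theorem contDiff_complexDistSq (x₀ e : E) (r : ℝ) (τ : ℂ) {k : WithTop ℕ∞} :
    ContDiff ℝ k (complexDistSq x₀ e r τ) := by
  have hsq : ContDiff ℝ k fun z => ((‖z - x₀‖ ^ 2 : ℝ) : ℂ) :=
    Complex.ofRealCLM.contDiff.comp ((contDiff_id.sub contDiff_const).norm_sq ℝ)
  have hin : ContDiff ℝ k fun z => ((⟪e, z - x₀⟫ : ℝ) : ℂ) :=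
    Complex.ofRealCLM.contDiff.comp (contDiff_const.inner ℝ (contDiff_id.sub contDiff_const))
  simp only [Complex.ofReal_pow] at hsq
  exact ((hsq.sub (contDiff_const.mul hin)).add contDiff_const).add contDiff_const

theorem hasFDerivAt_complexDistSq (x₀ e : E) (r : ℝ) (τ : ℂ) (z : E) :
    HasFDerivAt (complexDistSq x₀ e r τ) ((2 : ℂ) • complexInner x₀ e τ z) z := by
  have hsub : HasFDerivAt (fun y => y - x₀) (.id ℝ E) z := (hasFDerivAt_id z).sub_const x₀
  have hsq : HasFDerivAt (fun y => ((‖y - x₀‖ ^ 2 : ℝ) : ℂ)) _ z :=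
    Complex.ofRealCLM.hasFDerivAt.comp z hsub.norm_sq
  have hin : HasFDerivAt (fun y => ((⟪e, y - x₀⟫ : ℝ) : ℂ)) _ z :=
    (Complex.ofRealCLM ∘L innerSL ℝ e).hasFDerivAt.comp z hsub
  simp only [Complex.ofReal_pow] at hsq
  refine (((hsq.sub (hin.const_mul (2 * τ))).add_const (τ ^ 2 * (‖e‖ : ℂ) ^ 2)).add_const
    ((r : ℂ) ^ 2)).congr_fderiv ?_
  ext u
  simp only [map_sub, ContinuousLinearMap.comp_id, ContinuousLinearMap.comp_smul,
    ContinuousLinearMap.comp_sub, sub_apply, smul_apply, ContinuousLinearMap.comp_apply,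
    coe_innerSL_apply, Complex.ofRealCLM_apply, nsmul_eq_mul, Nat.cast_ofNat, smul_eq_mul,
    complexInner_apply, inner_sub_left, Complex.ofReal_sub]
  ring

theorem hasFDerivAt_complexInner_apply (x₀ e : E) (τ : ℂ) (z u : E) :
    HasFDerivAt (complexInner x₀ e τ · u) (Complex.ofRealCLM ∘L innerSL ℝ u) z := by
  have h := (Complex.ofRealCLM ∘L innerSL ℝ u).hasFDerivAt.comp z ((hasFDerivAt_id z).sub_const x₀)
  refine (h.sub_const (τ * ⟪e, u⟫)).congr_of_eventuallyEq (.of_forall fun y => ?_)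
  simp [complexInner_apply, real_inner_comm]

variable {s : ℝ} {z : E}

theorem hasFDerivAt_cpowPrimitive_complexDistSq
    (hz : complexDistSq x₀ e r τ z ∈ Complex.slitPlane) :
    HasFDerivAt (fun y => cpowPrimitive s (complexDistSq x₀ e r τ y))
      ((complexDistSq x₀ e r τ z ^ (s : ℂ) * 2) • complexInner x₀ e τ z) z := by
  refine ((hasDerivAt_cpowPrimitive s hz).complexToReal_fderiv.comp z
    (hasFDerivAt_complexDistSq x₀ e r τ z)).congr_fderiv ?_
  ext u
  simp [mul_assoc]

theorem hasFDerivAt_complexDistSq_cpow (hz : complexDistSq x₀ e r τ z ∈ Complex.slitPlane) :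
    HasFDerivAt (fun y => complexDistSq x₀ e r τ y ^ (s : ℂ))
      ((s * complexDistSq x₀ e r τ z ^ ((s : ℂ) - 1) * 2) • complexInner x₀ e τ z) z := by
  have h := (hasDerivAt_id (complexDistSq x₀ e r τ z)).cpow_const (c := (s : ℂ)) hz
  refine (h.complexToReal_fderiv.comp z (hasFDerivAt_complexDistSq x₀ e r τ z)).congr_fderiv ?_
  ext u
  simp [mul_assoc]

theorem fderiv_fderiv_cpowPrimitive_complexDistSq
    (hz : complexDistSq x₀ e r τ z ∈ Complex.slitPlane) (u : E) :
    fderiv ℝ (fun y => fderiv ℝ (fun y => cpowPrimitive s (complexDistSq x₀ e r τ y)) y u) z u =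
      4 * s * complexDistSq x₀ e r τ z ^ ((s : ℂ) - 1) * complexInner x₀ e τ z u ^ 2 +
        2 * complexDistSq x₀ e r τ z ^ (s : ℂ) * ‖u‖ ^ 2 := by
  have hcont := (contDiff_complexDistSq x₀ e r τ (k := 0)).continuous.continuousAt (x := z)
  have hev : (fun y => fderiv ℝ (fun y => cpowPrimitive s (complexDistSq x₀ e r τ y)) y u) =ᶠ[𝓝 z]
      fun y => complexDistSq x₀ e r τ y ^ (s : ℂ) * 2 * complexInner x₀ e τ y u := by
    filter_upwards [hcont.preimage_mem_nhds (Complex.isOpen_slitPlane.mem_nhds hz)] with y hy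
    rw [(hasFDerivAt_cpowPrimitive_complexDistSq hy).fderiv]
    rfl
  rw [hev.fderiv_eq, (((hasFDerivAt_complexDistSq_cpow hz).mul_const 2).fun_mul
    (hasFDerivAt_complexInner_apply x₀ e τ z u)).fderiv]
  simp only [add_apply, smul_apply, ContinuousLinearMap.comp_apply, coe_innerSL_apply,
    inner_self_eq_norm_sq_to_K, Real.ringHom_apply, Complex.ofRealCLM_apply, Complex.ofReal_pow,
    smul_eq_mul]
  ring

open Module (finrank)

theorem sum_complexInner_sq {ι : Type*} [Fintype ι] (b : OrthonormalBasis ι ℝ E) :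
    ∑ i, complexInner x₀ e τ z (b i) ^ 2 = complexDistSq x₀ e r τ z - r ^ 2 := by
  have hsum (x y : E) : ∑ i, (⟪x, b i⟫ : ℂ) * ⟪y, b i⟫ = (⟪x, y⟫ : ℝ) := by
    simp only [← b.sum_inner_mul_inner x y, Complex.ofReal_sum, Complex.ofReal_mul,
      real_inner_comm y]
  have hsq (x : E) : ∑ i, (⟪x, b i⟫ : ℂ) * ⟪x, b i⟫ = (‖x‖ : ℂ) ^ 2 := by
    rw [hsum, real_inner_self_eq_norm_sq, Complex.ofReal_pow]
  calc ∑ i, complexInner x₀ e τ z (b i) ^ 2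
      = ∑ i, ((⟪z - x₀, b i⟫ : ℂ) * ⟪z - x₀, b i⟫ - 2 * τ * ((⟪e, b i⟫ : ℂ) * ⟪z - x₀, b i⟫) +
          τ ^ 2 * ((⟪e, b i⟫ : ℂ) * ⟪e, b i⟫)) :=
        Finset.sum_congr rfl fun i _ => by rw [complexInner_apply]; ring
    _ = complexDistSq x₀ e r τ z - r ^ 2 := by
        rw [Finset.sum_add_distrib, Finset.sum_sub_distrib, ← Finset.mul_sum, ← Finset.mul_sum,
          hsq, hsum, hsq, complexDistSq]
        ring

/-- Up to a constant factor, the Newtonian kernel with pole `x₀ + τ • e`, regularised at scale `r`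
and continued analytically to complex `τ`. -/
def newtonKernel (x₀ e : E) (r : ℝ) (τ : ℂ) (z : E) : ℂ :=
  cpowPrimitive (-(finrank ℝ E / 2 : ℝ)) (complexDistSq x₀ e r τ z)

/- The exponent `-dim E / 2` is the one for which the terms of order `q ^ s`, with `q` the complex
squared distance, cancel. -/
theorem sum_fderiv_fderiv_newtonKernel {ι : Type*} [Fintype ι] (b : OrthonormalBasis ι ℝ E)
    (hz : complexDistSq x₀ e r τ z ∈ Complex.slitPlane) :
    ∑ i, fderiv ℝ (fun y => fderiv ℝ (newtonKernel x₀ e r τ) y (b i)) z (b i) =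
      2 * finrank ℝ E * r ^ 2 * complexDistSq x₀ e r τ z ^ ((-(finrank ℝ E / 2) - 1 : ℝ) : ℂ) := by
  have hpow : complexDistSq x₀ e r τ z ^ ((-(finrank ℝ E / 2 : ℝ) : ℝ) : ℂ) =
      complexDistSq x₀ e r τ z ^ ((-(finrank ℝ E / 2 : ℝ) : ℝ) - 1 : ℂ) *
        complexDistSq x₀ e r τ z := by
    rw [Complex.cpow_sub _ _ (Complex.slitPlane_ne_zero hz), Complex.cpow_one,
      div_mul_cancel₀ _ (Complex.slitPlane_ne_zero hz)]
  have hsum := fun i => fderiv_fderiv_cpowPrimitive_complexDistSq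
    (s := -(finrank ℝ E / 2 : ℝ)) hz (b i)
  change ∑ i, fderiv ℝ (fun y => fderiv ℝ (fun y => cpowPrimitive (-(finrank ℝ E / 2 : ℝ))
    (complexDistSq x₀ e r τ y)) y (b i)) z (b i) = _
  simp only [hsum, Finset.sum_add_distrib,
    ← Finset.mul_sum, sum_complexInner_sq (r := r) b, b.norm_eq_one, hpow, Complex.ofReal_one,
    one_pow, Finset.sum_const, Finset.card_univ, nsmul_eq_mul,
    ← Module.finrank_eq_card_basis b.toBasis]
  push_cast
  ring

theorem contDiffOn_newtonKernel {U : Set E} {k : WithTop ℕ∞}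
    (hU : ∀ z ∈ U, complexDistSq x₀ e r τ z ∈ Complex.slitPlane) :
    ContDiffOn ℝ k (newtonKernel x₀ e r τ) U :=
  ((contDiffOn_cpowPrimitive _).restrict_scalars ℝ).comp
    (contDiff_complexDistSq x₀ e r τ).contDiffOn hU

theorem measurable_newtonKernel [MeasurableSpace E] [BorelSpace E] (x₀ e : E) (r : ℝ) (τ : ℂ) :
    Measurable (newtonKernel x₀ e r τ) :=
  (measurable_cpowPrimitive _).comp
    (contDiff_complexDistSq x₀ e r τ (k := 0)).continuous.measurable

theorem fderiv_newtonKernel_apply (hz : complexDistSq x₀ e r τ z ∈ Complex.slitPlane) (u : E) :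
    fderiv ℝ (newtonKernel x₀ e r τ) z u =
      complexDistSq x₀ e r τ z ^ ((-(finrank ℝ E / 2 : ℝ) : ℝ) : ℂ) * 2 *
        complexInner x₀ e τ z u := by
  unfold newtonKernel
  rw [(hasFDerivAt_cpowPrimitive_complexDistSq hz).fderiv]
  rfl

theorem exists_norm_greenFlux_newtonKernel_le (E : Type*) [NormedAddCommGroup E]
    [InnerProductSpace ℝ E] : ∃ C : ℝ, 0 ≤ C ∧ ∀ {h : E → ℝ} {x₀ e z u : E} {r a : ℝ} {τ : ℂ},
      ‖e‖ = 1 → ‖z - x₀‖ + ‖τ‖ ≤ 2 → |r| ≤ 1 → ‖u‖ = 1 → 0 < a → a ≤ 1 →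
      a ≤ (complexDistSq x₀ e r τ z).re → ‖greenFlux h (newtonKernel x₀ e r τ) z u‖ ≤
        C * (|h z| + |fderiv ℝ h z u|) * a ^ (-(finrank ℝ E / 2 : ℝ)) := by
  refine ⟨‖cpowPrimitive (-(finrank ℝ E / 2 : ℝ)) 1‖ + 6, by positivity,
    fun {h x₀ e z u r a τ} he hz hr hu ha ha1 hq => ?_⟩
  have hs : -(finrank ℝ E / 2 : ℝ) ≤ 0 := neg_nonpos.2 (by positivity)
  have hq5 : ‖complexDistSq x₀ e r τ z‖ ≤ 5 :=
    (norm_complexDistSq_le he).trans <| by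
      nlinarith [norm_nonneg (z - x₀), norm_nonneg τ, sq_abs r, abs_nonneg r]
  have hkernel : ‖newtonKernel x₀ e r τ z‖ ≤
      (‖cpowPrimitive (-(finrank ℝ E / 2 : ℝ)) 1‖ + 6) * a ^ (-(finrank ℝ E / 2 : ℝ)) :=
    (norm_cpowPrimitive_le_of_le_re hs ha ha1 hq).trans
      (mul_le_mul_of_nonneg_right (by linarith) (by positivity))
  have hderiv : ‖fderiv ℝ (newtonKernel x₀ e r τ) z u‖ ≤
      (‖cpowPrimitive (-(finrank ℝ E / 2 : ℝ)) 1‖ + 6) * a ^ (-(finrank ℝ E / 2 : ℝ)) := by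
    have hinner := norm_complexInner_le (x₀ := x₀) (τ := τ) (z := z) he u
    rw [hu, mul_one] at hinner
    rw [fderiv_newtonKernel_apply (Or.inl (ha.trans_le hq)), norm_mul, norm_mul,
      Complex.norm_ofNat, mul_assoc, mul_comm]
    gcongr
    · linarith [norm_nonneg (cpowPrimitive (-(finrank ℝ E / 2 : ℝ)) 1)]
    · exact norm_cpow_le_of_le_re hs ha hq
  rw [greenFlux]
  refine (norm_sub_le _ _).trans ?_
  rw [norm_smul, norm_smul, Real.norm_eq_abs, Real.norm_eq_abs, mul_comm _ (|h z| + _),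
    mul_assoc, add_mul]
  gcongr

theorem differentiableOn_greenFlux_newtonKernel {V : Set ℂ}
    (hV : ∀ τ ∈ V, complexDistSq x₀ e r τ z ∈ Complex.slitPlane) (h : E → ℝ) (u : E) :
    DifferentiableOn ℂ (fun τ => greenFlux h (newtonKernel x₀ e r τ) z u) V := by
  have hq := (differentiable_complexDistSq x₀ e r z).differentiableOn (s := V)
  have hw : DifferentiableOn ℂ (fun τ => newtonKernel x₀ e r τ z) V := fun τ hτ =>
    (hasDerivAt_cpowPrimitive _ (hV τ hτ)).differentiableAt.comp_differentiableWithinAt τ (hq τ hτ)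
  have hdw : DifferentiableOn ℂ (fun τ => fderiv ℝ (newtonKernel x₀ e r τ) z u) V := by
    refine DifferentiableOn.congr (((hq.cpow_const hV).mul_const 2).mul ?_) fun τ hτ =>
      fderiv_newtonKernel_apply (hV τ hτ) u
    simp only [complexInner_apply]
    fun_prop
  simp only [greenFlux, Complex.real_smul]
  exact (hdw.const_mul _).sub (hw.const_mul _)

end Kernel

section HalfBall

variable {n : ℕ}

/-- The inner unit normal of `unitHalfBall n` along `flatFace n`. -/
abbrev lastVec (n : ℕ) : Euc (n + 1) := EuclideanSpace.single (Fin.last n) 1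

theorem norm_lastVec (n : ℕ) : ‖lastVec n‖ = 1 := by simp [lastVec]

theorem inner_lastVec (z : Euc (n + 1)) : ⟪lastVec n, z⟫ = lastc z := by
  simp [lastVec, lastc, EuclideanSpace.inner_single_left]

theorem lastc_sub (x y : Euc (n + 1)) : lastc (x - y) = lastc x - lastc y := rfl

theorem lastc_sub_smul_lastVec (x : Euc (n + 1)) (s : ℝ) :
    lastc (x - s • lastVec n) = lastc x - s := by simp [lastc]

theorem norm_sub_smul_lastVec_sq (x : Euc (n + 1)) (s : ℝ) :
    ‖x - s • lastVec n‖ ^ 2 = ‖x‖ ^ 2 - 2 * s * lastc x + s ^ 2 := by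
  rw [norm_sub_sq_real, real_inner_comm, inner_smul_left, inner_lastVec, norm_smul, norm_lastVec,
    mul_one, Real.norm_eq_abs, sq_abs, conj_trivial]
  ring

theorem abs_lastc_sub_le (x y : Euc (n + 1)) : |lastc x - lastc y| ≤ ‖x - y‖ := by
  rw [← lastc_sub, ← inner_lastVec]
  simpa only [norm_lastVec, one_mul] using abs_real_inner_le_norm (lastVec n) (x - y)

theorem lastc_le_norm (z : Euc (n + 1)) : lastc z ≤ ‖z‖ :=
  (le_abs_self _).trans (PiLp.norm_apply_le z (Fin.last n))

theorem hasFDerivAt_lastc (z : Euc (n + 1)) :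
    HasFDerivAt lastc (EuclideanSpace.proj (Fin.last n) : Euc (n + 1) →L[ℝ] ℝ) z :=
  (EuclideanSpace.proj (Fin.last n) : Euc (n + 1) →L[ℝ] ℝ).hasFDerivAt

theorem contDiff_lastc {k : WithTop ℕ∞} : ContDiff ℝ k (lastc : Euc (n + 1) → ℝ) :=
  (EuclideanSpace.proj (Fin.last n) : Euc (n + 1) →L[ℝ] ℝ).contDiff

theorem continuous_lastc : Continuous (lastc : Euc (n + 1) → ℝ) :=
  (contDiff_lastc (k := 0)).continuous

theorem isOpen_unitHalfBall (n : ℕ) : IsOpen (unitHalfBall n) :=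
  (isOpen_lt continuous_norm continuous_const).inter (isOpen_lt continuous_const continuous_lastc)

theorem convex_unitHalfBall (n : ℕ) : Convex ℝ (unitHalfBall n) := by
  have hball : Convex ℝ {y : Euc (n + 1) | ‖y‖ < 1} := by
    simpa only [ball, dist_zero_right] using convex_ball (0 : Euc (n + 1)) 1
  exact hball.inter (convex_halfSpace_gt
    (EuclideanSpace.proj (Fin.last n) : Euc (n + 1) →L[ℝ] ℝ).toLinearMap.isLinear 0)

theorem nonempty_unitHalfBall (n : ℕ) : (unitHalfBall n).Nonempty :=
  ⟨(1 / 2 : ℝ) • lastVec n, by rw [norm_smul, norm_lastVec]; norm_num, by simp [lastc]⟩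

theorem closure_unitHalfBall_subset (n : ℕ) :
    closure (unitHalfBall n) ⊆ {y | ‖y‖ ≤ 1 ∧ 0 ≤ lastc y} :=
  closure_minimal (fun _ hy => ⟨hy.1.le, hy.2.le⟩)
    ((isClosed_le continuous_norm continuous_const).inter
      (isClosed_le continuous_const continuous_lastc))

theorem isCompact_closure_unitHalfBall (n : ℕ) : IsCompact (closure (unitHalfBall n)) :=
  ((isBounded_closedBall (x := (0 : Euc (n + 1))) (r := 1)).subset fun _ hy =>
    mem_closedBall_zero_iff.2 hy.1.le).isCompact_closure

theorem uniqueDiffOn_closure_unitHalfBall (n : ℕ) : UniqueDiffOn ℝ (closure (unitHalfBall n)) :=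
  uniqueDiffOn_convex (convex_unitHalfBall n).closure
    ((nonempty_unitHalfBall n).mono
      ((isOpen_unitHalfBall n).subset_interior_iff.2 subset_closure))

theorem volume_unitHalfBall_lt_top (n : ℕ) : volume (unitHalfBall n) < ∞ :=
  (measure_mono subset_closure).trans_lt (isCompact_closure_unitHalfBall n).measure_lt_top

theorem volume_unitHalfBall_inter_lastc_le (δ : ℝ) :
    volume (unitHalfBall n ∩ {z | lastc z ≤ δ}) ≤ ENNReal.ofReal (2 ^ n * δ) := by
  let lo : Fin (n + 1) → ℝ := Fin.snoc (α := fun _ => ℝ) (fun _ : Fin n => -1) 0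
  let hi : Fin (n + 1) → ℝ := Fin.snoc (α := fun _ => ℝ) (fun _ : Fin n => 1) δ
  have hsub : unitHalfBall n ∩ {z | lastc z ≤ δ} ⊆ WithLp.ofLp (p := 2) ⁻¹' (Icc lo hi) := by
    rintro z ⟨⟨hz1, hz0⟩, hzδ⟩
    have hc i : |z i| ≤ 1 := (PiLp.norm_apply_le z i).trans hz1.le
    simp only [mem_preimage, mem_Icc, Pi.le_def, Fin.forall_fin_succ', lo, hi, Fin.snoc_castSucc,
      Fin.snoc_last]
    exact ⟨⟨fun i => (abs_le.1 (hc _)).1, hz0.le⟩, fun i => (abs_le.1 (hc _)).2, hzδ⟩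
  have hprod : ∏ i, ENNReal.ofReal (hi i - lo i) = ENNReal.ofReal (2 ^ n * δ) := by
    simp only [Fin.prod_univ_castSucc, lo, hi, Fin.snoc_castSucc, Fin.snoc_last, sub_zero,
      sub_neg_eq_add, one_add_one_eq_two, Finset.prod_const, Finset.card_univ, Fintype.card_fin]
    rw [← ENNReal.ofReal_pow zero_le_two, ← ENNReal.ofReal_mul (by positivity)]
  calc volume (unitHalfBall n ∩ {z | lastc z ≤ δ})
      ≤ volume (WithLp.ofLp (p := 2) ⁻¹' (Icc lo hi) : Set (Euc (n + 1))) := measure_mono hsub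
    _ = ENNReal.ofReal (2 ^ n * δ) := by
        rw [(PiLp.volume_preserving_ofLp (Fin (n + 1))).measure_preimage
          measurableSet_Icc.nullMeasurableSet, Real.volume_Icc_pi, hprod]

theorem norm_setIntegral_unitHalfBall_le {F : Type*} [NormedAddCommGroup F] [NormedSpace ℝ F]
    {f : Euc (n + 1) → F} {δ M : ℝ} (hδ : 0 ≤ δ) (hM : 0 ≤ M)
    (hf : ∀ z ∈ unitHalfBall n, lastc z ≤ δ → ‖f z‖ ≤ M)
    (hf0 : ∀ z ∈ unitHalfBall n, δ < lastc z → f z = 0) :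
    ‖∫ z in unitHalfBall n, f z‖ ≤ M * (2 ^ n * δ) := by
  have hvol := volume_unitHalfBall_inter_lastc_le (n := n) δ
  rw [setIntegral_eq_of_subset_of_forall_sdiff_eq_zero (isOpen_unitHalfBall n).measurableSet
    inter_subset_left fun z hz => hf0 z hz.1 (not_le.1 fun h => hz.2 ⟨hz.1, h⟩)]
  refine (norm_setIntegral_le_of_norm_le_const (hvol.trans_lt ENNReal.ofReal_lt_top)
    fun z hz => hf z hz.1 hz.2).trans ?_
  gcongr
  exact ENNReal.toReal_le_of_le_ofReal (by positivity) hvol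

theorem sub_lastc_smul_lastVec_mem_closure {x : Euc (n + 1)} (hx : x ∈ unitHalfBall n) :
    x - lastc x • lastVec n ∈ closure (unitHalfBall n) := by
  have hcont : Continuous fun s : ℝ => x - s • lastVec n := by fun_prop
  refine mem_closure_of_tendsto ((hcont.tendsto _).mono_left nhdsWithin_le_nhds)
    (mem_of_superset (Ico_mem_nhdsLT hx.2) fun s hs => ⟨?_, ?_⟩)
  · refine (abs_lt_of_sq_lt_sq ?_ zero_le_one).trans_le' (le_abs_self _)
    have hx1 : ‖x‖ ^ 2 < 1 ^ 2 := pow_lt_pow_left₀ hx.1 (norm_nonneg x) two_ne_zero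
    rw [norm_sub_smul_lastVec_sq]
    nlinarith [hs.1, hs.2]
  · rw [lastc_sub_smul_lastVec]
    exact sub_pos.2 hs.2

end HalfBall

theorem exists_pos_forall_le_imp_lt {X : Type*} [TopologicalSpace X] {K : Set X}
    (hK : IsCompact K) {d g : X → ℝ} (hd : ContinuousOn d K) (hg : ContinuousOn g K) {M : ℝ}
    (hdg : ∀ y ∈ K, d y ≤ 0 → g y < M) : ∃ δ > 0, ∀ y ∈ K, d y ≤ δ → g y < M := by
  have hKM : IsCompact (K ∩ g ⁻¹' Ici M) := by
    obtain ⟨u, hu, hgu⟩ := continuousOn_iff_isClosed.1 hg _ isClosed_Ici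
    rw [inter_comm, hgu, inter_comm]
    exact hK.inter_right hu
  obtain ⟨δ, hδ, hle⟩ := hKM.exists_forall_le' (hd.mono inter_subset_left) (a := 0)
    fun y hy => not_le.1 fun h => (hdg y hy.1 h).not_ge hy.2
  refine ⟨δ / 2, half_pos hδ, fun y hy hyδ => not_le.1 fun h => ?_⟩
  linarith [hle y ⟨hy, h⟩]

section SmallCauchyData

variable {n : ℕ} {h : Euc (n + 1) → ℝ} {ε : ℝ}

/-- The class of functions in the theorem: `h` is harmonic in the half-ball and `C¹` up to the
boundary, `|h|` and `|∇h|` are at most `1`, and the Cauchy data of `h` on the flat face are at most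
`ε`. -/
structure SmallCauchyData (h : Euc (n + 1) → ℝ) (ε : ℝ) : Prop where
  harmonicOn : HarmonicOn h (unitHalfBall n)
  contDiffOn_closure : ContDiffOn ℝ 1 h (closure (unitHalfBall n))
  abs_le_one : ∀ y ∈ unitHalfBall n, |h y| ≤ 1
  norm_fderiv_le_one : ∀ y ∈ unitHalfBall n, ‖fderiv ℝ h y‖ ≤ 1
  abs_le_of_mem_flatFace : ∀ y ∈ flatFace n, |h y| ≤ ε
  abs_normal_deriv_le_of_mem_flatFace : ∀ y ∈ flatFace n,
    |fderivWithin ℝ h (closure (unitHalfBall n)) y (lastVec n)| ≤ ε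

namespace SmallCauchyData

theorem abs_fderiv_le_one (hh : SmallCauchyData h ε) {y v : Euc (n + 1)} (hy : y ∈ unitHalfBall n)
    (hv : ‖v‖ = 1) : |fderiv ℝ h y v| ≤ 1 := by
  simpa only [hv, mul_one, Real.norm_eq_abs] using
    (fderiv ℝ h y).le_of_opNorm_le (hh.norm_fderiv_le_one y hy) v

theorem lipschitzOnWith_closure (hh : SmallCauchyData h ε) :
    LipschitzOnWith 1 h (closure (unitHalfBall n)) :=
  ((convex_unitHalfBall n).lipschitzOnWith_of_nnnorm_fderiv_le (𝕜 := ℝ)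
    (fun _ hx => (hh.harmonicOn.1.contDiffAt
      ((isOpen_unitHalfBall n).mem_nhds hx)).differentiableAt two_ne_zero)
    hh.norm_fderiv_le_one).closure hh.contDiffOn_closure.continuousOn

theorem abs_sub_le (hh : SmallCauchyData h ε) {x y : Euc (n + 1)}
    (hx : x ∈ closure (unitHalfBall n)) (hy : y ∈ closure (unitHalfBall n)) :
    |h x - h y| ≤ ‖x - y‖ := by
  simpa only [Real.norm_eq_abs, NNReal.coe_one, one_mul] using
    hh.lipschitzOnWith_closure.norm_sub_le hx hy

theorem abs_le_add_lastc (hh : SmallCauchyData h ε) {x : Euc (n + 1)} (hx : x ∈ unitHalfBall n) :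
    |h x| ≤ ε + lastc x := by
  have hy := sub_lastc_smul_lastVec_mem_closure hx
  have hsub := hh.abs_sub_le (subset_closure hx) hy
  rw [sub_sub_cancel, norm_smul, norm_lastVec, mul_one, Real.norm_of_nonneg hx.2.le] at hsub
  have hface := hh.abs_le_of_mem_flatFace _ ⟨(closure_unitHalfBall_subset n hy).1, by
    rw [lastc_sub_smul_lastVec, sub_self]⟩
  linarith [abs_sub_abs_le_abs_sub (h x) (h (x - lastc x • lastVec n))]

theorem exists_forall_lastc_le_abs_le (hh : SmallCauchyData h ε) (hε : 0 < ε) :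
    ∃ δ > 0, ∀ y ∈ unitHalfBall n, lastc y ≤ δ →
      |h y| ≤ 2 * ε ∧ |fderiv ℝ h y (lastVec n)| ≤ 2 * ε := by
  have hdh : ContinuousOn (fun z => fderivWithin ℝ h (closure (unitHalfBall n)) z (lastVec n))
      (closure (unitHalfBall n)) :=
    (hh.contDiffOn_closure.continuousOn_fderivWithin (uniqueDiffOn_closure_unitHalfBall n)
      le_rfl).clm_apply continuousOn_const
  have hface {y} (hy : y ∈ closure (unitHalfBall n)) (hy0 : lastc y ≤ 0) : y ∈ flatFace n :=
    have hcl := closure_unitHalfBall_subset n hy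
    ⟨hcl.1, hy0.antisymm hcl.2⟩
  obtain ⟨δ, hδ, hlt⟩ := exists_pos_forall_le_imp_lt (isCompact_closure_unitHalfBall n)
    continuous_lastc.continuousOn (hh.contDiffOn_closure.continuousOn.abs.sup hdh.abs)
    (M := 2 * ε) fun y hy hy0 => sup_lt_iff.2
      ⟨(hh.abs_le_of_mem_flatFace y (hface hy hy0)).trans_lt (by linarith),
        (hh.abs_normal_deriv_le_of_mem_flatFace y (hface hy hy0)).trans_lt (by linarith)⟩
  refine ⟨δ, hδ, fun y hy hyδ => ?_⟩
  obtain ⟨hy1, hy2⟩ := sup_lt_iff.1 (hlt y (subset_closure hy) hyδ)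
  rw [fderivWithin_of_mem_nhds
    (mem_of_superset ((isOpen_unitHalfBall n).mem_nhds hy) subset_closure)] at hy2
  exact ⟨hy1.le, hy2.le⟩

end SmallCauchyData

/-- `θ ∘ lastc` is a cutoff removing a thin collar of `flatFace n` inside `{lastc < δ₀}`, in which
the Cauchy data of `h` are so small that the terms created by differentiating the cutoff
integrate to at most `K` times any bound `N` for the other factors. -/
structure IsCollarCutoff (h : Euc (n + 1) → ℝ) (δ₀ K : ℝ) (θ : ℝ → ℝ) : Prop where
  contDiff : ContDiff ℝ 1 θ
  mem_Icc : ∀ s, θ s ∈ Icc 0 1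
  exists_eq_zero : ∃ δ > 0, ∀ s ≤ δ, θ s = 0
  eq_one : ∀ s ≥ δ₀, θ s = 1
  norm_setIntegral_le : ∀ {f : Euc (n + 1) → ℂ} {N : ℝ}, 0 ≤ N →
    (∀ z ∈ unitHalfBall n,
      ‖f z‖ ≤ |deriv θ (lastc z)| * ((|h z| + |fderiv ℝ h z (lastVec n)|) * N)) →
    ‖∫ z in unitHalfBall n, f z‖ ≤ K * N

theorem exists_isCollarCutoff (n : ℕ) : ∃ C, 0 ≤ C ∧
    ∀ {h : Euc (n + 1) → ℝ} {ε δ₀ : ℝ}, SmallCauchyData h ε → 0 < ε → 0 < δ₀ →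
      ∃ θ, IsCollarCutoff h δ₀ (C * ε) θ := by
  obtain ⟨B, hB, hstep⟩ := exists_contDiff_step
  refine ⟨B * 4 * 2 ^ n, by positivity, fun {h ε δ₀} hh hε hδ₀ => ?_⟩
  obtain ⟨δ₁, hδ₁, hsmall⟩ := hh.exists_forall_lastc_le_abs_le hε
  have hδ : 0 < min δ₁ δ₀ := lt_min hδ₁ hδ₀
  set δ := min δ₁ δ₀
  obtain ⟨θ, hθ, hθI, hθ0, hθ1, hθ'⟩ := hstep δ hδ
  refine ⟨θ, hθ, hθI, ⟨δ / 2, half_pos hδ, hθ0⟩, fun s hs => hθ1 s ((min_le_right _ _).trans hs),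
    fun {f N} hN hf => ?_⟩
  have hθ'0 {s} (hs : δ < s) : deriv θ s = 0 := by
    have hev : θ =ᶠ[𝓝 s] fun _ => 1 := mem_of_superset (Ioi_mem_nhds hs) fun y hy => hθ1 y hy.le
    rw [hev.deriv_eq, deriv_const]
  have hbound : ‖∫ z in unitHalfBall n, f z‖ ≤ B / δ * ((2 * ε + 2 * ε) * N) * (2 ^ n * δ) := by
    refine norm_setIntegral_unitHalfBall_le hδ.le (by positivity) (fun z hz hzδ => ?_)
      fun z hz hzδ => ?_
    · obtain ⟨hh1, hh2⟩ := hsmall z hz (hzδ.trans (min_le_left _ _))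
      refine (hf z hz).trans ?_
      gcongr
      exact hθ' _
    · have := hf z hz
      rwa [hθ'0 hzδ, abs_zero, zero_mul, norm_le_zero_iff] at this
  refine hbound.trans_eq ?_
  field_simp
  ring

end SmallCauchyData

section Rim

variable {n : ℕ} {h : Euc (n + 1) → ℝ} {ε r : ℝ} {x₀ z : Euc (n + 1)} {τ : ℂ} {θ : ℝ → ℝ}

/-- The radial cutoff confining Green's identity to the unit ball; its gradient lives in the rim
`98 / 100 ≤ ‖z‖ ≤ 99 / 100`. -/
def ballCutoff (n : ℕ) : ContDiffBump (0 : Euc (n + 1)) where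
  rIn := 98 / 100
  rOut := 99 / 100
  rIn_pos := by norm_num
  rIn_lt_rOut := by norm_num

theorem ballCutoff_eq_one (hz : ‖z‖ ≤ 98 / 100) : ballCutoff n z = 1 :=
  (ballCutoff n).one_of_mem_closedBall (mem_closedBall_zero_iff.2 hz)

theorem fderiv_ballCutoff_eq_zero (hz : ‖z‖ < 98 / 100) : fderiv ℝ (ballCutoff n) z = 0 := by
  rw [((ballCutoff n).eventuallyEq_one_of_mem_ball (mem_ball_zero_iff.2 hz)).fderiv_eq,
    fderiv_one, Pi.zero_apply]

theorem exists_abs_fderiv_ballCutoff_le (n : ℕ) :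
    ∃ C, 0 ≤ C ∧ ∀ z u, ‖u‖ = 1 → |fderiv ℝ (ballCutoff n) z u| ≤ C := by
  obtain ⟨C, hC⟩ := ((ballCutoff n).hasCompactSupport.fderiv (𝕜 := ℝ)).exists_bound_of_continuous
    ((ballCutoff n).contDiff.continuous_fderiv (n := 1) one_ne_zero)
  refine ⟨C, (norm_nonneg _).trans (hC 0), fun z u hu => ?_⟩
  simpa only [hu, mul_one, Real.norm_eq_abs] using
    (fderiv ℝ (ballCutoff n) z).le_of_opNorm_le (hC z) u

/-- The flux of Green's identity between `h` and the regularised Newtonian kernel with pole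
`x₀ + τ • lastVec n`, through the rim in which `ballCutoff n` varies. -/
def rimFlux (h : Euc (n + 1) → ℝ) (x₀ : Euc (n + 1)) (r : ℝ) (τ : ℂ) (z : Euc (n + 1)) : ℂ :=
  ∑ i, fderiv ℝ (ballCutoff n) z (EuclideanSpace.single i 1) •
    greenFlux h (newtonKernel x₀ (lastVec n) r τ) z (EuclideanSpace.single i 1)

/-- The total `rimFlux` outside the collar of the flat face cut away by `θ`. -/
def rimIntegral (θ : ℝ → ℝ) (h : Euc (n + 1) → ℝ) (x₀ : Euc (n + 1)) (r : ℝ) (τ : ℂ) : ℂ :=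
  ∫ z in unitHalfBall n, θ (lastc z) • rimFlux h x₀ r τ z

/-- The radius of the disc of parameters `τ` on which the kernels with pole `x₀ + τ • lastVec n` are
controlled in the rim. -/
def poleRadius (x₀ : Euc (n + 1)) : ℝ := 2 / 5 * (98 / 100 - ‖x₀‖)

theorem le_re_complexDistSq_of_mem_rim (hx₀ : ‖x₀‖ ≤ 1 / 2) (hτ : ‖τ‖ ≤ poleRadius x₀)
    (hz : 98 / 100 ≤ ‖z‖) : 1 / 20 ≤ (complexDistSq x₀ (lastVec n) r τ z).re := by
  have hdist : ‖z‖ - ‖x₀‖ ≤ ‖z - x₀‖ := norm_sub_norm_le z x₀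
  rw [poleRadius] at hτ
  refine le_trans ?_ (le_re_complexDistSq (norm_lastVec n) (by linarith))
  nlinarith

theorem norm_sub_add_norm_le_two (hx₀ : ‖x₀‖ ≤ 1 / 2) (hτ : ‖τ‖ ≤ poleRadius x₀)
    (hz : z ∈ unitHalfBall n) : ‖z - x₀‖ + ‖τ‖ ≤ 2 := by
  have := norm_sub_le z x₀
  rw [poleRadius] at hτ
  linarith [hz.1, norm_nonneg x₀]

theorem exists_norm_rimFlux_le (n : ℕ) : ∃ C, 0 ≤ C ∧
    ∀ {h : Euc (n + 1) → ℝ} {ε r : ℝ} {x₀ z : Euc (n + 1)} {τ : ℂ}, SmallCauchyData h ε →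
      ‖x₀‖ ≤ 1 / 2 → |r| ≤ 1 → ‖τ‖ ≤ poleRadius x₀ → z ∈ unitHalfBall n →
      ‖rimFlux h x₀ r τ z‖ ≤ C := by
  obtain ⟨A, hA, hχ⟩ := exists_abs_fderiv_ballCutoff_le n
  obtain ⟨B, hB, hflux⟩ := exists_norm_greenFlux_newtonKernel_le (Euc (n + 1))
  refine ⟨∑ _i : Fin (n + 1), A * (B * (1 + 1) *
    (1 / 20) ^ (-(Module.finrank ℝ (Euc (n + 1)) / 2 : ℝ))), by positivity,
    fun {h ε r x₀ z τ} hh hx₀ hr hτ hz => norm_sum_le_of_le _ fun i _ => ?_⟩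
  have hi : ‖(EuclideanSpace.single i 1 : Euc (n + 1))‖ = 1 := by simp
  rcases lt_or_ge ‖z‖ (98 / 100) with hz1 | hz1
  · rw [fderiv_ballCutoff_eq_zero hz1, zero_apply, zero_smul, norm_zero]
    positivity
  · rw [norm_smul]
    refine mul_le_mul (hχ z _ hi) ((hflux (norm_lastVec n) (norm_sub_add_norm_le_two hx₀ hτ hz)
      hr hi (by norm_num) (by norm_num) (le_re_complexDistSq_of_mem_rim hx₀ hτ hz1)).trans ?_)
      (norm_nonneg _) hA
    gcongr
    exacts [hh.abs_le_one z hz, hh.abs_fderiv_le_one hz hi]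

theorem differentiableOn_rimFlux (hx₀ : ‖x₀‖ ≤ 1 / 2) :
    DifferentiableOn ℂ (rimFlux h x₀ r · z) (ball 0 (poleRadius x₀)) := by
  simp only [rimFlux, Complex.real_smul]
  refine DifferentiableOn.fun_sum fun i _ => ?_
  rcases lt_or_ge ‖z‖ (98 / 100) with hz1 | hz1
  · simp only [fderiv_ballCutoff_eq_zero hz1, zero_apply, Complex.ofReal_zero, zero_mul]
    exact differentiableOn_const 0
  · refine (differentiableOn_greenFlux_newtonKernel (fun τ hτ => .inl ?_) h _).const_mul _
    linarith [le_re_complexDistSq_of_mem_rim (r := r) hx₀ (mem_ball_zero_iff.1 hτ).le hz1]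

theorem aestronglyMeasurable_greenFlux {w : Euc (n + 1) → ℂ}
    (hh : ContinuousOn h (unitHalfBall n)) (hw : Measurable w) (u : Euc (n + 1)) :
    AEStronglyMeasurable (greenFlux h w · u) (volume.restrict (unitHalfBall n)) :=
  ((hh.aestronglyMeasurable (isOpen_unitHalfBall n).measurableSet).smul
    (measurable_fderiv_apply_const ℝ w u).aestronglyMeasurable).sub
    ((measurable_fderiv_apply_const ℝ h u).aestronglyMeasurable.smul hw.aestronglyMeasurable)

theorem aestronglyMeasurable_rimFlux (hh : ContinuousOn h (unitHalfBall n)) :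
    AEStronglyMeasurable (rimFlux h x₀ r τ) (volume.restrict (unitHalfBall n)) := by
  unfold rimFlux
  exact Finset.aestronglyMeasurable_fun_sum _ fun i _ =>
    (measurable_fderiv_apply_const ℝ (ballCutoff n) _).aestronglyMeasurable.smul
      (aestronglyMeasurable_greenFlux hh (measurable_newtonKernel _ _ _ _) _)

end Rim

section CutoffGreen

open Module (finrank)

variable {n : ℕ} {h : Euc (n + 1) → ℝ} {ε δ₀ K r a : ℝ} {x₀ z : Euc (n + 1)} {τ : ℂ} {θ : ℝ → ℝ}

/-- The cutoff used in Green's identity, supported away from the whole boundary of the half-ball. -/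
def innerCutoff (θ : ℝ → ℝ) (z : Euc (n + 1)) : ℝ := θ (lastc z) * ballCutoff n z

/-- The term of Green's identity against `newtonKernel x₀ (lastVec n) r τ` in which the derivative
falls on the collar cutoff `θ`. -/
def collarTerm (θ : ℝ → ℝ) (h : Euc (n + 1) → ℝ) (x₀ : Euc (n + 1)) (r : ℝ) (τ : ℂ)
    (z : Euc (n + 1)) : ℂ :=
  (deriv θ (lastc z) * ballCutoff n z) •
    greenFlux h (newtonKernel x₀ (lastVec n) r τ) z (lastVec n)

/-- The term of Green's identity against `newtonKernel x₀ (lastVec n) r τ` that is present because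
the regularised kernel is not harmonic. -/
def bulkTerm (θ : ℝ → ℝ) (h : Euc (n + 1) → ℝ) (x₀ : Euc (n + 1)) (r : ℝ) (τ : ℂ)
    (z : Euc (n + 1)) : ℂ :=
  (innerCutoff θ z * h z * (2 * finrank ℝ (Euc (n + 1)) * r ^ 2)) •
    complexDistSq x₀ (lastVec n) r τ z ^ ((-(finrank ℝ (Euc (n + 1)) / 2) - 1 : ℝ) : ℂ)

theorem hasCompactSupport_innerCutoff (θ : ℝ → ℝ) :
    HasCompactSupport (innerCutoff θ : Euc (n + 1) → ℝ) :=
  (ballCutoff n).hasCompactSupport.mul_left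

namespace IsCollarCutoff

theorem contDiff_innerCutoff (hθ : IsCollarCutoff h δ₀ K θ) :
    ContDiff ℝ 1 (innerCutoff θ : Euc (n + 1) → ℝ) :=
  (hθ.contDiff.comp contDiff_lastc).mul (ballCutoff n).contDiff

theorem tsupport_innerCutoff_subset (hθ : IsCollarCutoff h δ₀ K θ) :
    tsupport (innerCutoff θ : Euc (n + 1) → ℝ) ⊆ unitHalfBall n := by
  obtain ⟨δ, hδ, hzero⟩ := hθ.exists_eq_zero
  intro z hz
  have hball : ‖z‖ ≤ 99 / 100 := by
    have := tsupport_mul_subset_right hz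
    rwa [(ballCutoff n).tsupport_eq, mem_closedBall_zero_iff] at this
  refine ⟨hball.trans_lt (by norm_num), hδ.trans_le ?_⟩
  refine closure_minimal (fun y hy => ?_) (isClosed_le continuous_const continuous_lastc) hz
  by_contra hyδ
  exact hy (by rw [innerCutoff, hzero _ (not_le.1 hyδ).le, zero_mul])

theorem innerCutoff_mem_Icc (hθ : IsCollarCutoff h δ₀ K θ) (z : Euc (n + 1)) :
    innerCutoff θ z ∈ Icc 0 1 :=
  unitInterval.mul_mem (hθ.mem_Icc _) ⟨(ballCutoff n).nonneg, (ballCutoff n).le_one⟩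

theorem abs_innerCutoff_mul_le_one (hθ : IsCollarCutoff h δ₀ K θ) (hh : SmallCauchyData h ε)
    (hz : z ∈ unitHalfBall n) : |innerCutoff θ z * h z| ≤ 1 := by
  have hξ := hθ.innerCutoff_mem_Icc z
  rw [abs_mul, abs_of_nonneg hξ.1]
  exact mul_le_one₀ hξ.2 (abs_nonneg _) (hh.abs_le_one z hz)

theorem fderiv_innerCutoff_apply (hθ : IsCollarCutoff h δ₀ K θ) (z u : Euc (n + 1)) :
    fderiv ℝ (innerCutoff θ) z u =
      deriv θ (lastc z) * lastc u * ballCutoff n z + θ (lastc z) * fderiv ℝ (ballCutoff n) z u := by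
  have hθ' := (hθ.contDiff.differentiable one_ne_zero (lastc z)).hasDerivAt.comp_hasFDerivAt z
    (hasFDerivAt_lastc z)
  have hproj : (EuclideanSpace.proj (Fin.last n) : Euc (n + 1) →L[ℝ] ℝ) u = lastc u := rfl
  have hχ := ((ballCutoff n).contDiff (n := 1)).differentiable one_ne_zero z
  have hξ : HasFDerivAt (innerCutoff θ) _ z := hθ'.mul hχ.hasFDerivAt
  rw [hξ.fderiv]
  simp only [add_apply, smul_apply, Function.comp_apply, smul_eq_mul, hproj]
  ring

theorem sum_fderiv_innerCutoff_smul_greenFlux (hθ : IsCollarCutoff h δ₀ K θ) (z : Euc (n + 1)) :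
    ∑ i, fderiv ℝ (innerCutoff θ) z (EuclideanSpace.single i 1) •
        greenFlux h (newtonKernel x₀ (lastVec n) r τ) z (EuclideanSpace.single i 1) =
      collarTerm θ h x₀ r τ z + θ (lastc z) • rimFlux h x₀ r τ z := by
  simp only [collarTerm, hθ.fderiv_innerCutoff_apply, add_smul, Finset.sum_add_distrib, rimFlux,
    Finset.smul_sum, smul_smul]
  congr 1
  rw [Finset.sum_eq_single (Fin.last n) (fun i _ hi => ?_) (by simp)]
  · simp [lastc]
  · simp [lastc, hi.symm]

theorem norm_bulkTerm_le (hθ : IsCollarCutoff h δ₀ K θ) (hh : SmallCauchyData h ε)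
    (hz : z ∈ unitHalfBall n) (ha : 0 < a)
    (hq : a ≤ (complexDistSq x₀ (lastVec n) r τ z).re) :
    ‖bulkTerm θ h x₀ r τ z‖ ≤
      2 * finrank ℝ (Euc (n + 1)) * r ^ 2 * a ^ (-(finrank ℝ (Euc (n + 1)) / 2 : ℝ) - 1) := by
  rw [bulkTerm, norm_smul, Real.norm_eq_abs, abs_mul, abs_of_nonneg
    (show 0 ≤ 2 * finrank ℝ (Euc (n + 1)) * r ^ 2 by positivity)]
  refine mul_le_mul (mul_le_of_le_one_left (by positivity) (hθ.abs_innerCutoff_mul_le_one hh hz))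
    (norm_cpow_le_of_le_re ?_ ha hq) (norm_nonneg _) (by positivity)
  linarith [show 0 ≤ (finrank ℝ (Euc (n + 1)) / 2 : ℝ) by positivity]

theorem integrableOn_bulkTerm (hθ : IsCollarCutoff h δ₀ K θ) (hh : SmallCauchyData h ε)
    (ha : 0 < a) (hq : ∀ z ∈ unitHalfBall n, a ≤ (complexDistSq x₀ (lastVec n) r τ z).re) :
    IntegrableOn (bulkTerm θ h x₀ r τ) (unitHalfBall n) := by
  have hU := (isOpen_unitHalfBall n).measurableSet
  have hq_meas := (contDiff_complexDistSq x₀ (lastVec n) r τ (k := 0)).continuous.measurable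
  have hmeas : AEStronglyMeasurable (bulkTerm θ h x₀ r τ) (volume.restrict (unitHalfBall n)) :=
    ((hθ.contDiff_innerCutoff.continuous.aestronglyMeasurable.mul
      (hh.harmonicOn.1.continuousOn.aestronglyMeasurable hU)).mul_const _).smul
      (hq_meas.pow_const _).aestronglyMeasurable
  exact .of_bound (volume_unitHalfBall_lt_top n) hmeas _
    ((ae_restrict_iff' hU).2 (.of_forall fun z hz => hθ.norm_bulkTerm_le hh hz ha (hq z hz)))

theorem norm_smul_le (hθ : IsCollarCutoff h δ₀ K θ) (s : ℝ) (w : ℂ) : ‖θ s • w‖ ≤ ‖w‖ := by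
  rw [norm_smul, Real.norm_of_nonneg (hθ.mem_Icc s).1]
  exact mul_le_of_le_one_left (norm_nonneg w) (hθ.mem_Icc s).2

theorem integrableOn_rimFlux (hθ : IsCollarCutoff h δ₀ K θ) (hh : SmallCauchyData h ε)
    (hx₀ : ‖x₀‖ ≤ 1 / 2) (hr : |r| ≤ 1) (hτ : ‖τ‖ ≤ poleRadius x₀) :
    IntegrableOn (fun z => θ (lastc z) • rimFlux h x₀ r τ z) (unitHalfBall n) := by
  obtain ⟨C, -, hrim⟩ := exists_norm_rimFlux_le n
  refine .of_bound (volume_unitHalfBall_lt_top n)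
    ((hθ.contDiff.continuous.comp continuous_lastc).aestronglyMeasurable.smul
      (aestronglyMeasurable_rimFlux hh.harmonicOn.1.continuousOn)) C
    ((ae_restrict_iff' (isOpen_unitHalfBall n).measurableSet).2 (.of_forall fun z hz =>
      (hθ.norm_smul_le _ _).trans (hrim hh hx₀ hr hτ hz)))

theorem integrableOn_collarTerm (hθ : IsCollarCutoff h δ₀ K θ) (hh : SmallCauchyData h ε) {N : ℝ}
    (hN : ∀ z ∈ unitHalfBall n, ‖collarTerm θ h x₀ r τ z‖ ≤
      |deriv θ (lastc z)| * ((|h z| + |fderiv ℝ h z (lastVec n)|) * N)) (hN0 : 0 ≤ N) :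
    IntegrableOn (collarTerm θ h x₀ r τ) (unitHalfBall n) := by
  have hθ' := hθ.contDiff.continuous_deriv le_rfl
  obtain ⟨M, hM⟩ := isCompact_Icc.exists_bound_of_continuousOn (hθ'.continuousOn (s := Icc 0 1))
  have hmeas : AEStronglyMeasurable (collarTerm θ h x₀ r τ) (volume.restrict (unitHalfBall n)) :=
    ((hθ'.comp continuous_lastc).mul (ballCutoff n).continuous).aestronglyMeasurable.smul
      (aestronglyMeasurable_greenFlux hh.harmonicOn.1.continuousOn
        (measurable_newtonKernel _ _ _ _) _)
  refine .of_bound (volume_unitHalfBall_lt_top n) hmeas (M * ((1 + 1) * N))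
    ((ae_restrict_iff' (isOpen_unitHalfBall n).measurableSet).2 (.of_forall fun z hz => ?_))
  refine (hN z hz).trans (mul_le_mul (hM _ ⟨hz.2.le, (lastc_le_norm z).trans hz.1.le⟩) ?_
    (by positivity) ((norm_nonneg _).trans (hM 0 (left_mem_Icc.2 zero_le_one))))
  gcongr
  exacts [hh.abs_le_one z hz, hh.abs_fderiv_le_one hz (norm_lastVec n)]

end IsCollarCutoff

theorem exists_norm_collarTerm_le (n : ℕ) : ∃ C, 0 ≤ C ∧
    ∀ {θ : ℝ → ℝ} {h : Euc (n + 1) → ℝ} {r a : ℝ} {x₀ z : Euc (n + 1)} {τ : ℂ},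
      ‖x₀‖ ≤ 1 / 2 → |r| ≤ 1 → ‖τ‖ ≤ poleRadius x₀ → z ∈ unitHalfBall n → 0 < a → a ≤ 1 →
      a ≤ (complexDistSq x₀ (lastVec n) r τ z).re →
      ‖collarTerm θ h x₀ r τ z‖ ≤ |deriv θ (lastc z)| * ((|h z| + |fderiv ℝ h z (lastVec n)|) *
        (C * a ^ (-(finrank ℝ (Euc (n + 1)) / 2 : ℝ)))) := by
  obtain ⟨C, hC, hflux⟩ := exists_norm_greenFlux_newtonKernel_le (Euc (n + 1))
  refine ⟨C, hC, fun {θ h r a x₀ z τ} hx₀ hr hτ hz ha ha1 hq => ?_⟩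
  rw [collarTerm, norm_smul, Real.norm_eq_abs, abs_mul, abs_of_nonneg (ballCutoff n).nonneg]
  refine mul_le_mul (mul_le_of_le_one_right (abs_nonneg _) (ballCutoff n).le_one) ?_
    (norm_nonneg _) (abs_nonneg _)
  refine (hflux (norm_lastVec n) (norm_sub_add_norm_le_two hx₀ hτ hz) hr (norm_lastVec n) ha ha1
    hq).trans_eq ?_
  ring

theorem sum_fderiv_fderiv_newtonKernel_smul
    (hz : complexDistSq x₀ (lastVec n) r τ z ∈ Complex.slitPlane) :
    innerCutoff θ z • h z • ∑ i, fderiv ℝ (fun y => fderiv ℝ (newtonKernel x₀ (lastVec n) r τ) y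
      (EuclideanSpace.single i 1)) z (EuclideanSpace.single i 1) = bulkTerm θ h x₀ r τ z := by
  have h := sum_fderiv_fderiv_newtonKernel (EuclideanSpace.basisFun (Fin (n + 1)) ℝ) hz
  simp only [EuclideanSpace.basisFun_apply] at h
  rw [h, bulkTerm]
  simp only [Complex.real_smul]
  push_cast
  ring

theorem exists_norm_rimIntegral_add_le (n : ℕ) : ∃ C, 0 ≤ C ∧
    ∀ {h : Euc (n + 1) → ℝ} {θ : ℝ → ℝ} {ε δ₀ K r a : ℝ} {x₀ : Euc (n + 1)} {τ : ℂ},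
      SmallCauchyData h ε → IsCollarCutoff h δ₀ K θ → ‖x₀‖ ≤ 1 / 2 → |r| ≤ 1 →
      ‖τ‖ ≤ poleRadius x₀ → 0 < a → a ≤ 1 →
      (∀ z ∈ unitHalfBall n, a ≤ (complexDistSq x₀ (lastVec n) r τ z).re) →
      ‖rimIntegral θ h x₀ r τ + ∫ z in unitHalfBall n, bulkTerm θ h x₀ r τ z‖ ≤
        C * K * a ^ (-(finrank ℝ (Euc (n + 1)) / 2 : ℝ)) := by
  obtain ⟨C, hC, hcollar⟩ := exists_norm_collarTerm_le n
  refine ⟨C, hC, fun {h θ ε δ₀ K r a x₀ τ} hh hθ hx₀ hr hτ ha ha1 hq => ?_⟩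
  have hslit : ∀ z ∈ unitHalfBall n, complexDistSq x₀ (lastVec n) r τ z ∈ Complex.slitPlane :=
    fun z hz => .inl (ha.trans_le (hq z hz))
  have hN : 0 ≤ C * a ^ (-(finrank ℝ (Euc (n + 1)) / 2 : ℝ)) := by positivity
  have hcollar' := fun z hz => hcollar (θ := θ) (h := h) hx₀ hr hτ hz ha ha1 (hq z hz)
  have hrim_int := hθ.integrableOn_rimFlux hh hx₀ hr hτ
  have hbulk_int := hθ.integrableOn_bulkTerm hh ha hq
  have hgreen : rimIntegral θ h x₀ r τ + ∫ z in unitHalfBall n, bulkTerm θ h x₀ r τ z =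
      -∫ z in unitHalfBall n, collarTerm θ h x₀ r τ z := by
    rw [rimIntegral, eq_neg_iff_add_eq_zero, ← integral_add hrim_int hbulk_int,
      ← integral_add (hrim_int.fun_add hbulk_int) (hθ.integrableOn_collarTerm hh hcollar' hN),
      ← setIntegral_cutoff_green (μ := volume) (isOpen_unitHalfBall n)
      (fun i => EuclideanSpace.single i 1) hθ.contDiff_innerCutoff (hasCompactSupport_innerCutoff θ)
      hθ.tsupport_innerCutoff_subset hh.harmonicOn.1 hh.harmonicOn.2
      (contDiffOn_newtonKernel hslit)]
    refine setIntegral_congr_fun (isOpen_unitHalfBall n).measurableSet fun z hz => ?_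
    rw [hθ.sum_fderiv_innerCutoff_smul_greenFlux,
      sum_fderiv_fderiv_newtonKernel_smul (hslit z hz)]
    ring
  rw [hgreen, norm_neg, mul_assoc, mul_left_comm]
  exact hθ.norm_setIntegral_le hN hcollar'

end CutoffGreen

section RimIntegral

open Module (finrank)

variable {n : ℕ} {h : Euc (n + 1) → ℝ} {ε δ₀ K r : ℝ} {x x₀ : Euc (n + 1)} {θ : ℝ → ℝ}

theorem exists_norm_rimIntegral_le (n : ℕ) : ∃ C, 0 ≤ C ∧
    ∀ {h : Euc (n + 1) → ℝ} {θ : ℝ → ℝ} {ε δ₀ K r : ℝ} {x₀ : Euc (n + 1)} {τ : ℂ},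
      SmallCauchyData h ε → IsCollarCutoff h δ₀ K θ → ‖x₀‖ ≤ 1 / 2 → |r| ≤ 1 →
      ‖τ‖ ≤ poleRadius x₀ → ‖rimIntegral θ h x₀ r τ‖ ≤ C := by
  obtain ⟨C, hC, hrim⟩ := exists_norm_rimFlux_le n
  exact ⟨C * volume.real (unitHalfBall n), by positivity,
    fun {h θ ε δ₀ K r x₀ τ} hh hθ hx₀ hr hτ =>
      norm_setIntegral_le_of_norm_le_const (volume_unitHalfBall_lt_top n) fun z hz =>
        (hθ.norm_smul_le _ _).trans (hrim hh hx₀ hr hτ hz)⟩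

theorem IsCollarCutoff.differentiableOn_rimIntegral (hθ : IsCollarCutoff h δ₀ K θ)
    (hh : SmallCauchyData h ε) (hx₀ : ‖x₀‖ ≤ 1 / 2) (hr : |r| ≤ 1) :
    DifferentiableOn ℂ (rimIntegral θ h x₀ r) (ball 0 (poleRadius x₀)) := by
  obtain ⟨C, -, hrim⟩ := exists_norm_rimFlux_le n
  have : IsFiniteMeasure (volume.restrict (unitHalfBall n)) :=
    isFiniteMeasure_restrict.2 (volume_unitHalfBall_lt_top n).ne
  refine differentiableOn_integral_of_norm_le (M := C) isOpen_ball
    (fun τ hτ => (hθ.integrableOn_rimFlux hh hx₀ hr (mem_ball_zero_iff.1 hτ).le).1)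
    (.of_forall fun z => (differentiableOn_rimFlux hx₀).const_smul (θ (lastc z)))
    ((ae_restrict_iff' (isOpen_unitHalfBall n).measurableSet).2 (.of_forall fun z hz τ hτ =>
      (hθ.norm_smul_le _ _).trans (hrim hh hx₀ hr (mem_ball_zero_iff.1 hτ).le hz)))

theorem IsCollarCutoff.nonneg (hθ : IsCollarCutoff h δ₀ K θ) : 0 ≤ K := by
  have hzero := hθ.norm_setIntegral_le (f := 0) zero_le_one fun z _ => by
    rw [Pi.zero_apply, norm_zero]
    positivity
  simpa using hzero

/- As long as the pole stays below the flat face, the regularised kernels and their derivatives are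
bounded in the half-ball, so Green's identity bounds the flux through the rim by the data on the
flat face. -/
theorem exists_norm_rimIntegral_le_of_norm_le (n : ℕ) : ∃ C, 0 ≤ C ∧
    ∀ {h : Euc (n + 1) → ℝ} {θ : ℝ → ℝ} {ε δ₀ K r : ℝ} {x₀ : Euc (n + 1)} {τ : ℂ},
      SmallCauchyData h ε → IsCollarCutoff h δ₀ K θ → ‖x₀‖ ≤ 1 / 2 → lastc x₀ = -(1 / 200) →
      |r| ≤ 1 → ‖τ‖ ≤ 1 / 500 → ‖rimIntegral θ h x₀ r τ‖ ≤ C * (K + r ^ 2) := by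
  obtain ⟨C, hC, hgreen⟩ := exists_norm_rimIntegral_add_le n
  set a : ℝ := (1 / 200) ^ 2 / 4 with ha
  set N : ℝ := C * a ^ (-(finrank ℝ (Euc (n + 1)) / 2 : ℝ)) with hN
  set N' : ℝ := 2 * finrank ℝ (Euc (n + 1)) * a ^ (-(finrank ℝ (Euc (n + 1)) / 2 : ℝ) - 1) *
    volume.real (unitHalfBall n) with hN'
  have ha0 : 0 < a := by positivity
  refine ⟨N + N', by positivity, fun {h θ ε δ₀ K r x₀ τ} hh hθ hx₀ hx₀' hr hτ => ?_⟩
  have hq : ∀ z ∈ unitHalfBall n, a ≤ (complexDistSq x₀ (lastVec n) r τ z).re := fun z hz => by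
    have hdist : 1 / 200 ≤ ‖z - x₀‖ := by
      linarith [hz.2, lastc_le_norm (z - x₀), lastc_sub z x₀]
    refine le_trans ?_ (le_re_complexDistSq (norm_lastVec n) (by linarith))
    rw [ha]
    gcongr
  have hbulk : ‖∫ z in unitHalfBall n, bulkTerm θ h x₀ r τ z‖ ≤ N' * r ^ 2 := by
    refine (norm_setIntegral_le_of_norm_le_const (volume_unitHalfBall_lt_top n) fun z hz =>
      hθ.norm_bulkTerm_le hh hz ha0 (hq z hz)).trans_eq ?_
    rw [hN']
    ring
  have hsum := hgreen hh hθ hx₀ hr (by rw [poleRadius]; linarith) ha0 (by norm_num [ha]) hq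
  calc ‖rimIntegral θ h x₀ r τ‖ ≤ C * K * a ^ (-(finrank ℝ (Euc (n + 1)) / 2 : ℝ)) + N' * r ^ 2 :=
        (norm_le_add_norm_add _ _).trans (add_le_add hsum hbulk)
    _ = N * K + N' * r ^ 2 := by rw [hN]; ring
    _ ≤ (N + N') * (K + r ^ 2) := by
        have hK := hθ.nonneg
        have : 0 ≤ N * r ^ 2 + N' * K := by positivity
        linarith

theorem setIntegral_bulkTerm_ofReal (θ : ℝ → ℝ) (h : Euc (n + 1) → ℝ) (x₀ : Euc (n + 1)) (r t : ℝ) :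
    ∫ z in unitHalfBall n, bulkTerm θ h x₀ r t z =
      ((2 * finrank ℝ (Euc (n + 1)) * ∫ z, (unitHalfBall n).indicator (innerCutoff θ * h) z *
        (r ^ 2 * (‖z - (x₀ + t • lastVec n)‖ ^ 2 + r ^ 2) ^
          (-(finrank ℝ (Euc (n + 1)) / 2 : ℝ) - 1)) : ℝ) : ℂ) := by
  rw [← integral_const_mul, ← integral_complex_ofReal,
    ← integral_indicator (isOpen_unitHalfBall n).measurableSet]
  refine integral_congr_ae (.of_forall fun z => ?_)
  by_cases hz : z ∈ unitHalfBall n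
  · simp only [indicator_of_mem hz, bulkTerm, complexDistSq_ofReal, Pi.mul_apply]
    rw [← Complex.ofReal_cpow (by positivity), Complex.real_smul]
    push_cast
    ring
  · simp only [indicator_of_notMem hz, zero_mul, mul_zero, Complex.ofReal_zero]

theorem IsCollarCutoff.abs_indicator_sub_le (hθ : IsCollarCutoff h (lastc x / 2) K θ)
    (hh : SmallCauchyData h ε) (hx : ‖x‖ < 1 / 3) (hx' : 0 < lastc x) (z : Euc (n + 1)) :
    |(unitHalfBall n).indicator (innerCutoff θ * h) z - h x| ≤ 4 / lastc x * ‖z - x‖ := by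
  have hxU : x ∈ unitHalfBall n := ⟨by linarith, hx'⟩
  have hxn := lastc_le_norm x
  rcases le_or_gt ‖z - x‖ (lastc x / 2) with hzx | hzx
  · have hlast := (abs_le.1 (abs_lastc_sub_le z x)).1
    have hzn : ‖z‖ ≤ 98 / 100 := by linarith [norm_sub_norm_le z x]
    have hzU : z ∈ unitHalfBall n := ⟨by linarith, by linarith⟩
    rw [indicator_of_mem hzU, Pi.mul_apply, innerCutoff, hθ.eq_one _ (by linarith),
      ballCutoff_eq_one hzn, one_mul, one_mul]
    refine (hh.abs_sub_le (subset_closure hzU) (subset_closure hxU)).trans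
      (le_mul_of_one_le_left (norm_nonneg _) ?_)
    rw [one_le_div hx']
    linarith
  · have hind : |(unitHalfBall n).indicator (innerCutoff θ * h) z| ≤ 1 := by
      by_cases hz : z ∈ unitHalfBall n
      · rw [indicator_of_mem hz]
        exact hθ.abs_innerCutoff_mul_le_one hh hz
      · rw [indicator_of_notMem hz, abs_zero]
        exact zero_le_one
    calc _ ≤ |(unitHalfBall n).indicator (innerCutoff θ * h) z| + |h x| := abs_sub _ _
      _ ≤ 4 / lastc x * (lastc x / 2) := by
          rw [show 4 / lastc x * (lastc x / 2) = 2 by field_simp; norm_num]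
          linarith [hh.abs_le_one x hxU]
      _ ≤ 4 / lastc x * ‖z - x‖ := by gcongr

theorem IsCollarCutoff.measurable_indicator (hθ : IsCollarCutoff h δ₀ K θ)
    (hh : SmallCauchyData h ε) :
    Measurable ((unitHalfBall n).indicator (innerCutoff θ * h)) := by
  have hcont : ContinuousOn (innerCutoff θ * h) (unitHalfBall n) :=
    hθ.contDiff_innerCutoff.continuous.continuousOn.mul hh.harmonicOn.1.continuousOn
  classical
  rw [← piecewise_eq_indicator]
  exact hcont.measurable_piecewise continuousOn_const (isOpen_unitHalfBall n).measurableSet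

/-- The point at depth `1 / 200` under the flat face, vertically below `x`. -/
def poleCenter (x : Euc (n + 1)) : Euc (n + 1) := x - (lastc x + 1 / 200) • lastVec n

theorem poleCenter_add (x : Euc (n + 1)) : poleCenter x + (lastc x + 1 / 200) • lastVec n = x :=
  sub_add_cancel _ _

theorem lastc_poleCenter (x : Euc (n + 1)) : lastc (poleCenter x) = -(1 / 200) := by
  rw [poleCenter, lastc_sub_smul_lastVec]
  ring

theorem norm_poleCenter_sq (x : Euc (n + 1)) :
    ‖poleCenter x‖ ^ 2 = ‖x‖ ^ 2 - lastc x ^ 2 + (1 / 200) ^ 2 := by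
  rw [poleCenter, norm_sub_smul_lastVec_sq]
  ring

theorem norm_poleCenter_le (hx : ‖x‖ < 1 / 3) : ‖poleCenter x‖ ≤ 1 / 2 := by
  have hsq := norm_poleCenter_sq x
  nlinarith [norm_nonneg (poleCenter x), norm_nonneg x, sq_nonneg (lastc x)]

theorem lastc_add_le_poleRadius (hx : ‖x‖ < 1 / 3) :
    lastc x + 1 / 200 ≤ 95 / 100 * poleRadius (poleCenter x) := by
  have hsq := norm_poleCenter_sq x
  have hx2 : ‖x‖ ^ 2 < 1 / 9 := by nlinarith [norm_nonneg x]
  rw [poleRadius]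
  nlinarith [sq_nonneg (‖poleCenter x‖ - 38 / 100 * lastc x),
    sq_nonneg (lastc x + 38 / 100 * ‖poleCenter x‖), norm_nonneg (poleCenter x)]

theorem sq_rpow_neg_finrank (hr : 0 < r) :
    (r ^ 2) ^ (-(finrank ℝ (Euc (n + 1)) / 2 : ℝ)) = (r ^ (n + 1))⁻¹ := by
  rw [finrank_euclideanSpace_fin, ← Real.rpow_natCast r 2, ← Real.rpow_mul hr.le,
    ← Real.rpow_natCast r (n + 1), ← Real.rpow_neg hr.le]
  congr 1
  push_cast
  ring

/- The bulk term with pole `x` is an approximate identity at scale `r`. -/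
theorem exists_mul_abs_le_norm_setIntegral_bulkTerm_add (n : ℕ) : ∃ c, 0 < c ∧ ∃ C, 0 ≤ C ∧
    ∀ {h : Euc (n + 1) → ℝ} {θ : ℝ → ℝ} {ε K r : ℝ} {x : Euc (n + 1)}, SmallCauchyData h ε →
      IsCollarCutoff h (lastc x / 2) K θ → ‖x‖ < 1 / 3 → 0 < lastc x → 0 < r →
      c * |h x| ≤ ‖∫ z in unitHalfBall n,
        bulkTerm θ h (poleCenter x) r (lastc x + 1 / 200 : ℝ) z‖ + C * (r / lastc x) := by
  obtain ⟨c, hc, C, hC, happrox⟩ :=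
    exists_abs_integral_mul_rpow_sub_le (volume : Measure (Euc (n + 1)))
  have hd : 0 < (2 * finrank ℝ (Euc (n + 1)) : ℝ) := by
    rw [finrank_euclideanSpace_fin]
    positivity
  refine ⟨2 * finrank ℝ (Euc (n + 1)) * c, by positivity, 2 * finrank ℝ (Euc (n + 1)) * (C * 4),
    by positivity, fun {h θ ε K r x} hh hθ hx hx' hr => ?_⟩
  have hpoint := happrox hr (hθ.measurable_indicator hh) (hθ.abs_indicator_sub_le hh hx hx')
  rw [setIntegral_bulkTerm_ofReal, poleCenter_add, Complex.norm_real, Real.norm_eq_abs, abs_mul,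
    abs_of_pos hd]
  set I : ℝ := ∫ z, (unitHalfBall n).indicator (innerCutoff θ * h) z *
    (r ^ 2 * (‖z - x‖ ^ 2 + r ^ 2) ^ (-(finrank ℝ (Euc (n + 1)) / 2 : ℝ) - 1))
  have hI : c * |h x| ≤ |I| + C * (4 / lastc x) * r := by
    have htri := abs_sub_abs_le_abs_sub (c * h x) I
    rw [abs_sub_comm, abs_mul, abs_of_pos hc] at htri
    linarith
  calc _ = 2 * finrank ℝ (Euc (n + 1)) * (c * |h x|) := by ring
    _ ≤ 2 * finrank ℝ (Euc (n + 1)) * (|I| + C * (4 / lastc x) * r) := by gcongr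
    _ = _ := by ring

theorem exists_mul_abs_le_norm_rimIntegral_add (n : ℕ) : ∃ c, 0 < c ∧ ∃ C, 0 ≤ C ∧
    ∀ {h : Euc (n + 1) → ℝ} {θ : ℝ → ℝ} {ε K r : ℝ} {x : Euc (n + 1)}, SmallCauchyData h ε →
      IsCollarCutoff h (lastc x / 2) K θ → ‖x‖ < 1 / 3 → 0 < lastc x → 0 < r → r ≤ 1 →
      c * |h x| ≤ ‖rimIntegral θ h (poleCenter x) r (lastc x + 1 / 200 : ℝ)‖ +
        C * (K * (r ^ (n + 1))⁻¹ + r / lastc x) := by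
  obtain ⟨A, hA, hgreen⟩ := exists_norm_rimIntegral_add_le n
  obtain ⟨c, hc, B, hB, hbulk⟩ := exists_mul_abs_le_norm_setIntegral_bulkTerm_add n
  refine ⟨c, hc, A + B, by positivity, fun {h θ ε K r x} hh hθ hx hx' hr hr1 => ?_⟩
  have hr1' : |r| ≤ 1 := abs_le.2 ⟨by linarith, hr1⟩
  have hτ : ‖((lastc x + 1 / 200 : ℝ) : ℂ)‖ ≤ poleRadius (poleCenter x) := by
    rw [Complex.norm_real, Real.norm_of_nonneg (by positivity)]
    linarith [lastc_add_le_poleRadius hx]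
  have hsum := hgreen hh hθ (norm_poleCenter_le hx) hr1' hτ (sq_pos_of_pos hr)
    (pow_le_one₀ hr.le hr1) fun z _ => by
      rw [complexDistSq_ofReal, Complex.ofReal_re]
      exact le_add_of_nonneg_left (sq_nonneg _)
  rw [sq_rpow_neg_finrank hr] at hsum
  have hK := hθ.nonneg
  have hrest : 0 ≤ A * (r / lastc x) + B * (K * (r ^ (n + 1))⁻¹) := by positivity
  have htri := norm_le_add_norm_add (∫ z in unitHalfBall n,
    bulkTerm θ h (poleCenter x) r (lastc x + 1 / 200 : ℝ) z)
    (rimIntegral θ h (poleCenter x) r (lastc x + 1 / 200 : ℝ))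
  rw [add_comm (∫ z in unitHalfBall n, _)] at htri
  linarith [hbulk hh hθ hx hx' hr]

end RimIntegral

section Propagation

/- The flux through the rim is holomorphic in the position of the pole, so its smallness for poles
below the flat face propagates, by the three-circle theorem, to poles in the half-ball. -/
theorem exists_norm_rimIntegral_poleCenter_le (n : ℕ) : ∃ γ : ℝ, 0 < γ ∧ ∃ M, 0 ≤ M ∧
    ∀ {h : Euc (n + 1) → ℝ} {θ : ℝ → ℝ} {ε δ₀ K r : ℝ} {x : Euc (n + 1)},
      SmallCauchyData h ε → IsCollarCutoff h δ₀ K θ → ‖x‖ < 1 / 3 → 0 < lastc x → 0 < r → r ≤ 1 →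
      ‖rimIntegral θ h (poleCenter x) r (lastc x + 1 / 200 : ℝ)‖ ≤ M * (K + r ^ 2) ^ γ := by
  obtain ⟨γ, hγ, -, hthree⟩ := exists_norm_le_mul_rpow_of_small_on_closedBall (E := ℂ)
    (β := 1 / 500) (ρ := 95 / 100) (by norm_num) (by norm_num) (by norm_num)
  obtain ⟨A, hA, hlarge⟩ := exists_norm_rimIntegral_le n
  obtain ⟨B, -, hsmall⟩ := exists_norm_rimIntegral_le_of_norm_le n
  refine ⟨γ, hγ, max A B, le_max_of_le_left hA,
    fun {h θ ε δ₀ K r x} hh hθ hx hx' hr hr1 => ?_⟩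
  have hx₀ := norm_poleCenter_le hx
  have hr1' : |r| ≤ 1 := abs_le.2 ⟨by linarith, hr1⟩
  have hK := hθ.nonneg
  have hR : 0 < poleRadius (poleCenter x) ∧ poleRadius (poleCenter x) ≤ 1 := by
    rw [poleRadius]
    constructor <;> linarith [norm_nonneg (poleCenter x)]
  refine hthree hR.1 (by positivity) (hθ.differentiableOn_rimIntegral hh hx₀ hr1')
    (fun w hw => ?_) (fun w hw => ?_) _ ?_
  · exact (hlarge hh hθ hx₀ hr1' (mem_ball_zero_iff.1 hw).le).trans (le_max_left A B)
  · refine (hsmall hh hθ hx₀ (lastc_poleCenter x) hr1' ?_).trans ?_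
    · linarith [mem_closedBall_zero_iff.1 hw]
    · gcongr
      exact le_max_right A B
  · rw [mem_closedBall_zero_iff, Complex.norm_real, Real.norm_of_nonneg (by positivity)]
    exact lastc_add_le_poleRadius hx

theorem exists_abs_le_mul_rpow_add (n : ℕ) : ∃ γ : ℝ, 0 < γ ∧ ∃ A, 0 ≤ A ∧
    ∀ {h : Euc (n + 1) → ℝ} {ε : ℝ} {x : Euc (n + 1)}, SmallCauchyData h ε → 0 < ε →
      ‖x‖ < 1 / 3 → 0 < lastc x → ∀ r ∈ Ioc (0 : ℝ) 1,
      |h x| ≤ A * ((ε + r ^ 2) ^ γ + ε * (r ^ (n + 1))⁻¹ + r / lastc x) := by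
  obtain ⟨K, hK, hcutoff⟩ := exists_isCollarCutoff n
  obtain ⟨γ, hγ, M, hM, hrim⟩ := exists_norm_rimIntegral_poleCenter_le n
  obtain ⟨c, hc, C, hC, hpole⟩ := exists_mul_abs_le_norm_rimIntegral_add n
  refine ⟨γ, hγ, (M * (K + 1) ^ γ + C * (K + 1)) / c, by positivity,
    fun {h ε x} hh hε hx hx' r ⟨hr, hr1⟩ => ?_⟩
  obtain ⟨θ, hθ⟩ := hcutoff hh hε (half_pos hx')
  set u := (ε + r ^ 2) ^ γ
  set v := ε * (r ^ (n + 1))⁻¹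
  set w := r / lastc x
  have hu : 0 ≤ u := by positivity
  have hv : 0 ≤ v := by positivity
  have hw : 0 ≤ w := by positivity
  have hrpow : (K * ε + r ^ 2) ^ γ ≤ (K + 1) ^ γ * u := by
    rw [← Real.mul_rpow (by positivity) (by positivity)]
    gcongr
    linarith [mul_nonneg hK (sq_nonneg r)]
  have hsum : K * v + w ≤ (K + 1) * (u + v + w) := by
    linarith [mul_nonneg hK hu, mul_nonneg hK hw]
  rw [div_mul_eq_mul_div, le_div_iff₀' hc]
  calc c * |h x| ≤ M * (K * ε + r ^ 2) ^ γ + C * (K * v + w) := by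
        rw [← mul_assoc K ε]
        exact (hpole hh hθ hx hx' hr hr1).trans (by gcongr; exact hrim hh hθ hx hx' hr hr1)
    _ ≤ M * ((K + 1) ^ γ * (u + v + w)) + C * ((K + 1) * (u + v + w)) := by
        gcongr
        exact hrpow.trans (by gcongr; linarith)
    _ = (M * (K + 1) ^ γ + C * (K + 1)) * (u + v + w) := by ring

/- The radius `r = ε ^ (1 / (2 * d))` balances the three terms. -/
theorem exists_add_add_le_mul_rpow {γ d ε t : ℝ} (hγ : 0 < γ) (hd : 1 ≤ d) (hε : 0 < ε)
    (hε1 : ε ≤ 1) (ht : ε ^ (1 / (4 * d)) ≤ t) :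
    ∃ r ∈ Ioc (0 : ℝ) 1, (ε + r ^ 2) ^ γ + ε * (r ^ d)⁻¹ + r / t ≤
      (2 ^ γ + 1 + 1) * ε ^ min (γ / d) (1 / (4 * d)) := by
  have hd0 : 0 < d := by linarith
  have hd4 : 1 / (4 * d) ≤ 1 / 4 := one_div_le_one_div_of_le (by norm_num) (by linarith)
  have hmono : ∀ {s s' : ℝ}, s' ≤ s → ε ^ s ≤ ε ^ s' :=
    fun h => Real.rpow_le_rpow_of_exponent_ge hε hε1 h
  set γ' := min (γ / d) (1 / (4 * d))
  have hγ'd : γ' ≤ 1 / (4 * d) := min_le_right _ _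
  refine ⟨ε ^ (1 / (2 * d)), ⟨by positivity, Real.rpow_le_one hε.le hε1 (by positivity)⟩, ?_⟩
  rw [add_mul, add_mul, one_mul]
  refine add_le_add (add_le_add ?_ ?_) ?_
  · have hr2 : (ε ^ (1 / (2 * d))) ^ 2 = ε ^ (1 / d) := by
      rw [← Real.rpow_natCast, ← Real.rpow_mul hε.le]
      congr 1
      field_simp
      norm_num
    have hεd : ε ≤ ε ^ (1 / d) := by
      simpa only [Real.rpow_one] using hmono ((div_le_one hd0).2 hd)
    calc (ε + (ε ^ (1 / (2 * d))) ^ 2) ^ γ ≤ (2 * ε ^ (1 / d)) ^ γ := by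
          gcongr
          linarith
      _ = 2 ^ γ * ε ^ (γ / d) := by
          rw [Real.mul_rpow (by positivity) (by positivity), ← Real.rpow_mul hε.le,
            one_div_mul_eq_div]
      _ ≤ 2 ^ γ * ε ^ γ' :=
          mul_le_mul_of_nonneg_left (hmono (min_le_left _ _)) (by positivity)
  · calc ε * ((ε ^ (1 / (2 * d))) ^ d)⁻¹ = ε ^ (1 / 2 : ℝ) := by
          rw [← Real.rpow_mul hε.le, ← Real.rpow_neg hε.le, ← Real.rpow_one_add' hε.le] <;>
            field_simp <;> norm_num
      _ ≤ ε ^ γ' := hmono (by linarith)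
  · calc ε ^ (1 / (2 * d)) / t ≤ ε ^ (1 / (2 * d)) / ε ^ (1 / (4 * d)) := by gcongr
      _ = ε ^ (1 / (4 * d)) := by
          rw [← Real.rpow_sub hε]
          congr 1
          field_simp
          norm_num
      _ ≤ ε ^ γ' := hmono hγ'd

theorem exists_le_mul_rpow_of_forall_le {γ A d : ℝ} (hγ : 0 < γ) (hA : 0 ≤ A) (hd : 1 ≤ d) :
    ∃ γ' : ℝ, 0 < γ' ∧ γ' < 1 ∧ ∃ C : ℝ, 0 < C ∧ ∀ {m ε t : ℝ}, 0 < ε → m ≤ 1 → m ≤ ε + t →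
      (∀ r ∈ Ioc (0 : ℝ) 1, m ≤ A * ((ε + r ^ 2) ^ γ + ε * (r ^ d)⁻¹ + r / t)) →
      m ≤ C * ε ^ γ' := by
  have hd4 : 1 / (4 * d) ≤ 1 / 4 := one_div_le_one_div_of_le (by norm_num) (by linarith)
  set γ' := min (γ / d) (1 / (4 * d))
  have hγ'0 : 0 < γ' := by positivity
  have hγ'd : γ' ≤ 1 / (4 * d) := min_le_right _ _
  refine ⟨γ', hγ'0, by linarith, 2 + A * (2 ^ γ + 1 + 1), by positivity,
    fun {m ε t} hε hm1 hmt hm => ?_⟩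
  have hpos : 0 ≤ A * (2 ^ γ + 1 + 1) * ε ^ γ' := by positivity
  rcases le_or_gt 1 ε with hε1 | hε1
  · linarith [Real.one_le_rpow hε1 hγ'0.le]
  rcases le_or_gt t (ε ^ (1 / (4 * d))) with htε | htε
  · have hmono : ∀ {s : ℝ}, γ' ≤ s → ε ^ s ≤ ε ^ γ' :=
      fun h => Real.rpow_le_rpow_of_exponent_ge hε hε1.le h
    have hε_le : ε ≤ ε ^ γ' := by
      simpa only [Real.rpow_one] using hmono (show γ' ≤ 1 by linarith)
    linarith [hmono hγ'd]
  · obtain ⟨r, hr, hsum⟩ := exists_add_add_le_mul_rpow hγ hd hε hε1.le htε.le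
    calc m ≤ A * ((2 ^ γ + 1 + 1) * ε ^ γ') := (hm r hr).trans (by gcongr)
      _ ≤ (2 + A * (2 ^ γ + 1 + 1)) * ε ^ γ' := by
          linarith [Real.rpow_nonneg hε.le γ']

end Propagation

/-- Propagation of smallness from the flat part of the boundary
(Alessandrini–Rondi–Rosset–Vessella): if `h` is harmonic and bounded with bounded
gradient in the half-ball and both `h` and its normal derivative are `≤ ε` on the
flat face, then `|h| ≤ C ε^γ` on the half-ball of radius `1/3`. -/
theorem propagation_of_smallness {n : ℕ} :
    ∃ γ : ℝ, 0 < γ ∧ γ < 1 ∧ ∃ C : ℝ, 0 < C ∧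
      ∀ (h : Euc (n + 1) → ℝ) (ε : ℝ), 0 < ε →
      HarmonicOn h (unitHalfBall n) →
      ContDiffOn ℝ 1 h (closure (unitHalfBall n)) →
      (∀ y ∈ unitHalfBall n, |h y| ≤ 1) →
      (∀ y ∈ unitHalfBall n, ‖fderiv ℝ h y‖ ≤ 1) →
      (∀ y ∈ flatFace n, |h y| ≤ ε) →
      (∀ y ∈ flatFace n,
        |fderivWithin ℝ h (closure (unitHalfBall n)) y
          (EuclideanSpace.single (Fin.last n) 1)| ≤ ε) →
      ∀ x : Euc (n + 1), ‖x‖ < 1 / 3 → 0 < lastc x → |h x| ≤ C * ε ^ γ := by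
  obtain ⟨γ, hγ, A, hA, hbound⟩ := exists_abs_le_mul_rpow_add n
  obtain ⟨γ', hγ', hγ'1, C, hC, hopt⟩ :=
    exists_le_mul_rpow_of_forall_le (d := (n + 1 : ℕ)) hγ hA (by simp)
  simp only [Real.rpow_natCast] at hopt
  refine ⟨γ', hγ', hγ'1, C, hC, fun h ε hε hharm hcont hle hgrad hflat hnormal x hx hx' => ?_⟩
  have hh : SmallCauchyData h ε := ⟨hharm, hcont, hle, hgrad, hflat, hnormal⟩
  have hxU : x ∈ unitHalfBall n := ⟨by linarith, hx'⟩
  exact hopt hε (hh.abs_le_one x hxU) (hh.abs_le_add_lastc hxU) (hbound hh hε hx hx')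

end NodalNeumann
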